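/- arXiv:2605.16709 — 3 statements merged into one kernel-verified Lean document; each statement's English description precedes it below -/
import Mathlib

section
/- Achievability part of Theorem 1 (covert multi-bit watermarking capacity with non-causal state). Let S, U, X be finite sets, P_S a pmf on S, and P_{X|S} a conditional pmf (token law). Suppose P_{U|S} and W_{X|U,S} are conditional pmfs satisfying the marginal constraint: for every s with P_S(s) > 0 and every x, Σ_u P_{U|S}(u|s) W_{X|U,S}(x|u,s) = P_{X|S}(x|s). Let the joint pmf of (S,U,X) be P_S · P_{U|S} · W_{X|U,S}. Then for every rate R < I(U;X) − I(U;S), every key rate R_K > I(U;X|S), and every ε > 0, there exists a blocklength n, a message set M of size at least 2^{nR}, a key set K of size at most 2^{nR_K}, a stochastic encoder f assigning to each triple (s^n, m, k) ∈ S^n × M × K a pmf on U^n, and a decoder g : X^n × K → M, such that when S^n ~ P_S^{⊗n}, the message M is uniform on M, the key K is uniform on K and independent of (M, S^n), U^n is drawn from f(S^n, M, K), and X^n is generated memorylessly with X_t ~ W_{X|U,S}(·|U_t, S_t) independently across t, the following hold: (i) P(g(X^n, K) ≠ M) ≤ ε, and (ii) for every message m, V(P̃^m_{X^n S^n}, (P_{X|S}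 P_S)^{⊗n}) ≤ ε, where P̃^m_{X^n S^n} is the joint pmf of (X^n, S^n) conditioned on M = m (averaged over the key). -/
open Finset Filter Real

noncomputable section

open scoped Classical

/-- Pushforward of a mass function along a map. -/
def pushf {α β : Type*} [Fintype α] (p : α → ℝ) (f : α → β) : β → ℝ :=
  fun b => ∑ a, if f a = b then p a else 0

/-- Shannon entropy (in bits) of a mass function on a finite type,
with the convention `0 * logb 2 0 = 0`. -/
def ent {α : Type*} [Fintype α] (p : α → ℝ) : ℝ := -∑ a, p a * Real.logb 2 (p a)

/-- Shannon entropy (in bits) of a random variable `f` under the mass function `p`. -/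
def entRV {α β : Type*} [Fintype α] [Fintype β] (p : α → ℝ) (f : α → β) : ℝ :=
  ent (pushf p f)

/-- Mutual information `I(f; g)` (in bits) under the mass function `p`. -/
def mi {α β γ : Type*} [Fintype α] [Fintype β] [Fintype γ]
    (p : α → ℝ) (f : α → β) (g : α → γ) : ℝ :=
  entRV p f + entRV p g - entRV p (fun a => (f a, g a))

/-- Conditional mutual information `I(f; g | h)` (in bits) under the mass function `p`. -/
def cmi {α β γ δ : Type*} [Fintype α] [Fintype β] [Fintype γ] [Fintype δ]
    (p : α → ℝ) (f : α → β) (g : α → γ) (h : α → δ) : ℝ :=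
  entRV p (fun a => (f a, h a)) + entRV p (fun a => (g a, h a))
    - entRV p (fun a => (f a, g a, h a)) - entRV p h

/-- Conditional entropy `H(f | g)` (in bits) under the mass function `p`. -/
def condEnt {α β γ : Type*} [Fintype α] [Fintype β] [Fintype γ]
    (p : α → ℝ) (f : α → β) (g : α → γ) : ℝ :=
  entRV p (fun a => (f a, g a)) - entRV p g

/-- Total variation distance between two mass functions on a finite type. -/
def TV {α : Type*} [Fintype α] (p q : α → ℝ) : ℝ := (∑ a, |p a - q a|) / 2

/-- The binary entropy function (in bits), with `h2 0 = h2 1 = 0`. -/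
def h2 (t : ℝ) : ℝ := -(t * Real.logb 2 t) - (1 - t) * Real.logb 2 (1 - t)

/-!
Fix `2M` messages, `K ≈ 2^{nR_K}` keys and `L ≈ 2^{n I(U;S)}` codewords per message and key, all
drawn independently from `P_U^{⊗n}`. Given the state, the encoder picks one of the `L` codewords
of the message and key with probability proportional to its likelihood of having produced that
state.

If the state were instead the output of a uniformly chosen codeword, encoder and channel
together would give an explicit mixture of i.i.d. laws. Soft covering (a second-moment bound on
the truncated likelihood ratio) shows that this ideal law of the state is close to `P_S^{⊗n}` as
soon as `L` exceeds `2^{n I(U;S)}`, and that the ideal joint law of output and state, averaged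
over the key, is close to the covert target as soon as `K L` exceeds `2^{n I(U;X,S)}`; by the
chain rule `I(U;X,S) = I(U;S) + I(U;X|S)` this is the condition `R_K > I(U;X|S)`. Under the
ideal law a threshold decoder succeeds when `M L` is below `2^{n I(U;X)}`, which is the rate
condition.

These bounds hold on average over codebooks and messages. Fixing a good codebook and keeping the
better half of the messages makes them hold for every message.
-/

open scoped BigOperators

/-! ### Push-forwards of mass functions -/

section Pushforward

variable {Ω α β γ : Type*} [Fintype Ω] {p : Ω → ℝ}

theorem sum_pushf_mul [Fintype α] (p : Ω → ℝ) (f : Ω → α) (G : α → ℝ) :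
    ∑ a, pushf p f a * G a = ∑ ω, p ω * G (f ω) := by
  simp only [pushf, sum_mul, ite_mul, zero_mul]
  rw [sum_comm]
  simp

theorem sum_pushf [Fintype α] (p : Ω → ℝ) (f : Ω → α) : ∑ a, pushf p f a = ∑ ω, p ω := by
  simpa using sum_pushf_mul p f 1

theorem sum_pushf_fst [Fintype α] (p : Ω → ℝ) (f : Ω → α) (g : Ω → β) (b : β) :
    ∑ a, pushf p (fun ω => (f ω, g ω)) (a, b) = pushf p g b := by
  unfold pushf
  rw [sum_comm]
  simp [ite_and]

theorem sum_pushf_snd [Fintype β] (p : Ω → ℝ) (f : Ω → α) (g : Ω → β) (a : α) :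
    ∑ b, pushf p (fun ω => (f ω, g ω)) (a, b) = pushf p f a := by
  unfold pushf
  rw [sum_comm]
  simp [ite_and]

theorem sum_pushf_mid [Fintype β] (p : Ω → ℝ) (f : Ω → α) (g : Ω → β) (h : Ω → γ) (a : α) (c : γ) :
    ∑ b, pushf p (fun ω => (f ω, g ω, h ω)) (a, b, c) = pushf p (fun ω => (f ω, h ω)) (a, c) := by
  unfold pushf
  rw [sum_comm]
  simp [ite_and]

theorem pushf_nonneg (hp : ∀ ω, 0 ≤ p ω) (f : Ω → α) (a : α) : 0 ≤ pushf p f a :=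
  sum_nonneg fun ω _ => by split_ifs <;> simp [hp ω]

theorem le_pushf (hp : ∀ ω, 0 ≤ p ω) (f : Ω → α) (ω : Ω) : p ω ≤ pushf p f (f ω) := by
  have h : (if f ω = f ω then p ω else 0) ≤ pushf p f (f ω) :=
    single_le_sum (f := fun ω' => if f ω' = f ω then p ω' else 0)
      (fun ω' _ => by split_ifs <;> simp [hp ω']) (mem_univ ω)
  simpa using h

theorem pushf_pos (hp : ∀ ω, 0 ≤ p ω) (f : Ω → α) {ω : Ω} (hω : 0 < p ω) : 0 < pushf p f (f ω) :=
  hω.trans_le (le_pushf hp f ω)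

theorem sum_filter_le_sum_filter (hp : ∀ ω, 0 ≤ p ω) {E F : Ω → Prop} [DecidablePred E]
    [DecidablePred F] (h : ∀ ω, 0 < p ω → E ω → F ω) :
    ∑ ω with E ω, p ω ≤ ∑ ω with F ω, p ω := by
  simp only [sum_filter]
  refine sum_le_sum fun ω _ => ?_
  rcases (hp ω).eq_or_lt with h0 | h0
  · simp [← h0]
  · split_ifs with hE hF
    exacts [le_rfl, absurd (h ω h0 hE) hF, h0.le, le_rfl]

theorem pushf_mem_stdSimplex [Fintype α] (hp : p ∈ stdSimplex ℝ Ω) (f : Ω → α) :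
    pushf p f ∈ stdSimplex ℝ α :=
  ⟨pushf_nonneg hp.1 f, (sum_pushf p f).trans hp.2⟩

theorem pushf_le_pushf (hp : ∀ ω, 0 ≤ p ω) {f : Ω → α} {g : Ω → β} {a : α} {b : β}
    (h : ∀ ω, f ω = a → g ω = b) : pushf p f a ≤ pushf p g b := by
  refine sum_le_sum fun ω _ => ?_
  by_cases hf : f ω = a
  · simp [hf, h ω hf]
  · rw [if_neg hf]
    split_ifs <;> simp [hp ω]

theorem pushf_pair_le_fst (hp : ∀ ω, 0 ≤ p ω) (f : Ω → α) (g : Ω → β) (a : α) (b : β) :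
    pushf p (fun ω => (f ω, g ω)) (a, b) ≤ pushf p f a :=
  pushf_le_pushf hp fun _ h => congrArg Prod.fst h

theorem pushf_pair_le_snd (hp : ∀ ω, 0 ≤ p ω) (f : Ω → α) (g : Ω → β) (a : α) (b : β) :
    pushf p (fun ω => (f ω, g ω)) (a, b) ≤ pushf p g b :=
  pushf_le_pushf hp fun _ h => congrArg Prod.snd h

end Pushforward

/-! ### Independent sampling -/

section Iid

variable {J B I : Type*} [Fintype J]

/-- The law of a family indexed by `J` of independent samples from the mass function `q`. It serves
both for words of length `n` (with `J = Fin n`) and for random codebooks. -/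
def iid (q : B → ℝ) (c : J → B) : ℝ := ∏ j, q (c j)

variable [DecidableEq J]

theorem sum_iid_filter_forall [Fintype B] (q : B → ℝ) (E : J → B → Prop)
    [∀ j, DecidablePred (E j)] :
    ∑ c with ∀ j, E j (c j), iid q c = ∏ j, ∑ b with E j b, q b := by
  simp only [iid, sum_filter, Fintype.prod_sum, prod_ite_zero, mem_univ, true_imp_iff]

theorem prod_mem_stdSimplex [Fintype B] {q : J → B → ℝ} (hq : ∀ j, q j ∈ stdSimplex ℝ B) :
    (fun c : J → B => ∏ j, q j (c j)) ∈ stdSimplex ℝ (J → B) := by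
  refine ⟨fun c => prod_nonneg fun j _ => (hq j).1 _, ?_⟩
  rw [← Fintype.prod_sum]
  exact prod_eq_one fun j _ => (hq j).2

theorem iid_mem_stdSimplex [Fintype B] {q : B → ℝ} (hq : q ∈ stdSimplex ℝ B) :
    (iid q : (J → B) → ℝ) ∈ stdSimplex ℝ (J → B) :=
  prod_mem_stdSimplex fun _ => hq

theorem pushf_iid [Fintype B] (q : B → ℝ) (f : B → I) :
    pushf (iid q) (fun w : J → B => f ∘ w) = iid (pushf q f) := by
  funext a
  simpa only [pushf, iid, sum_filter, funext_iff, Function.comp_apply] using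
    sum_iid_filter_forall q fun j b => f b = a j

theorem pushf_iid_pair [Fintype B] {I' : Type*} (q : B → ℝ) (f : B → I) (g : B → I')
    (a : J → I) (a' : J → I') :
    pushf (iid q) (fun w : J → B => (f ∘ w, g ∘ w)) (a, a') =
      ∏ j, pushf q (fun b => (f b, g b)) (a j, a' j) := by
  simpa only [pushf, iid, sum_filter, funext_iff, Function.comp_apply, Prod.mk.injEq,
    forall_and] using sum_iid_filter_forall q fun j b => (f b, g b) = (a j, a' j)

theorem sum_iid_mul_prod [Fintype B] {q : B → ℝ} (hq : ∑ b, q b = 1) (s : Finset J)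
    (φ : J → B → ℝ) :
    ∑ c, iid q c * ∏ j ∈ s, φ j (c j) = ∏ j ∈ s, ∑ b, q b * φ j b := by
  have hfactor (c : J → B) :
      iid q c * ∏ j ∈ s, φ j (c j) = ∏ j, q (c j) * if j ∈ s then φ j (c j) else 1 := by
    rw [prod_mul_distrib, Fintype.prod_ite_mem, iid]
  calc ∑ c, iid q c * ∏ j ∈ s, φ j (c j)
      = ∏ j, ∑ b, q b * if j ∈ s then φ j b else 1 := by simp only [hfactor, Fintype.prod_sum]
    _ = ∏ j, if j ∈ s then ∑ b, q b * φ j b else 1 :=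
        prod_congr rfl fun j _ => by split_ifs <;> simp [hq]
    _ = ∏ j ∈ s, ∑ b, q b * φ j b := Fintype.prod_ite_mem s _

theorem sum_iid_mul [Fintype B] {q : B → ℝ} (hq : ∑ b, q b = 1) (j : J) (φ : B → ℝ) :
    ∑ c, iid q c * φ (c j) = ∑ b, q b * φ b := by
  simpa using sum_iid_mul_prod hq {j} fun _ => φ

theorem sum_iid_mul_mul [Fintype B] {q : B → ℝ} (hq : ∑ b, q b = 1) {i j : J} (hij : i ≠ j)
    (φ ψ : B → ℝ) :
    ∑ c, iid q c * (φ (c i) * ψ (c j)) = (∑ b, q b * φ b) * ∑ b, q b * ψ b := by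
  simpa [prod_pair hij, hij.symm] using
    sum_iid_mul_prod hq {i, j} fun k => if k = i then φ else ψ

theorem sum_iid_mul_sq_le [Fintype B] {q : B → ℝ} (hq : q ∈ stdSimplex ℝ B) [Fintype I]
    [Nonempty I] {e : I → J} (he : Function.Injective e) (Y : B → ℝ) :
    ∑ c, iid q c * (𝔼 i, Y (c (e i)) - ∑ b, q b * Y b) ^ 2 ≤
      (∑ b, q b * Y b ^ 2) / Fintype.card I := by
  set μ := ∑ b, q b * Y b
  set v := ∑ b, q b * (Y b - μ) ^ 2
  have hmean : ∑ b, q b * (Y b - μ) = 0 := by simp [mul_sub, ← sum_mul, hq.2, μ]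
  have hcov (i j : I) : ∑ c, iid q c * ((Y (c (e i)) - μ) * (Y (c (e j)) - μ)) =
      if j = i then v else 0 := by
    split_ifs with h
    · rw [h, sum_iid_mul hq.2 (e i) fun b => (Y b - μ) * (Y b - μ)]
      simp only [v, sq]
    · rw [sum_iid_mul_mul hq.2 (fun hc => h (he hc).symm) (Y · - μ) (Y · - μ), hmean, zero_mul]
  have hv : v ≤ ∑ b, q b * Y b ^ 2 := by
    have : v = ∑ b, q b * Y b ^ 2 - μ ^ 2 := by
      calc v = ∑ b, (q b * Y b ^ 2 - 2 * μ * (q b * Y b) + μ ^ 2 * q b) :=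
            sum_congr rfl fun b _ => by ring
        _ = ∑ b, q b * Y b ^ 2 - μ ^ 2 := by
            rw [sum_add_distrib, sum_sub_distrib, ← mul_sum, ← mul_sum, hq.2]; ring
    nlinarith [sq_nonneg μ]
  calc ∑ c, iid q c * (𝔼 i, Y (c (e i)) - μ) ^ 2
      = ∑ c, iid q c * 𝔼 i, 𝔼 j, (Y (c (e i)) - μ) * (Y (c (e j)) - μ) := by
        refine sum_congr rfl fun c _ => ?_
        rw [← expect_mul_expect, ← sq, expect_sub_distrib, Fintype.expect_const]
    _ = 𝔼 i : I, 𝔼 j : I, if j = i then v else 0 := by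
        simp only [mul_expect, ← expect_sum_comm, hcov]
    _ = v / Fintype.card I := by simp [NNRat.smul_def, div_eq_inv_mul]
    _ ≤ _ := by gcongr

theorem sum_iid_mul_abs_le [Fintype B] {q : B → ℝ} (hq : q ∈ stdSimplex ℝ B) [Fintype I]
    [Nonempty I] {e : I → J} (he : Function.Injective e) (Y : B → ℝ) :
    ∑ c, iid q c * |𝔼 i, Y (c (e i)) - ∑ b, q b * Y b| ≤
      √((∑ b, q b * Y b ^ 2) / Fintype.card I) := by
  refine le_sqrt_of_sq_le ((?_ : _ ≤ _).trans (sum_iid_mul_sq_le hq he Y))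
  have hw := iid_mem_stdSimplex (J := J) hq
  simpa only [sq_abs] using pow_arith_mean_le_arith_mean_pow univ (iid q) _ (fun c _ => hw.1 c) hw.2
    (fun c _ => abs_nonneg (𝔼 i, Y (c (e i)) - ∑ b, q b * Y b)) 2

end Iid

theorem sum_filter_le_div_sq {Ω : Type*} [Fintype Ω] {p : Ω → ℝ} (hp : ∀ ω, 0 ≤ p ω) (Y : Ω → ℝ)
    {δ : ℝ} (hδ : 0 < δ) : ∑ ω with δ ≤ |Y ω|, p ω ≤ (∑ ω, p ω * Y ω ^ 2) / δ ^ 2 := by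
  rw [le_div_iff₀ (by positivity), sum_mul]
  calc ∑ ω with δ ≤ |Y ω|, p ω * δ ^ 2 ≤ ∑ ω with δ ≤ |Y ω|, p ω * Y ω ^ 2 := by
        refine sum_le_sum fun ω hω => mul_le_mul_of_nonneg_left ?_ (hp ω)
        rw [← sq_abs (Y ω)]
        gcongr
        exact (mem_filter.1 hω).2
    _ ≤ _ := sum_le_univ_sum_of_nonneg fun ω => mul_nonneg (hp ω) (sq_nonneg _)

theorem tendsto_iid_deviation {B : Type*} [Fintype B] {q : B → ℝ} (hq : q ∈ stdSimplex ℝ B)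
    (Y : B → ℝ) {δ : ℝ} (hδ : 0 < δ) :
    Tendsto (fun n : ℕ =>
      ∑ w : Fin n → B with δ ≤ |𝔼 t, Y (w t) - ∑ b, q b * Y b|, iid q w) atTop (nhds 0) := by
  refine squeeze_zero' (Eventually.of_forall fun n => sum_nonneg fun w _ =>
    (iid_mem_stdSimplex hq).1 w) (g := fun n : ℕ => (∑ b, q b * Y b ^ 2) / n / δ ^ 2) ?_ ?_
  · filter_upwards [eventually_gt_atTop 0] with n hn
    have : Nonempty (Fin n) := ⟨⟨0, hn⟩⟩
    refine (sum_filter_le_div_sq (iid_mem_stdSimplex hq).1 _ hδ).trans ?_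
    gcongr
    simpa using sum_iid_mul_sq_le hq (J := Fin n) Function.injective_id Y
  · simpa using (tendsto_const_div_atTop_nhds_zero_nat (∑ b, q b * Y b ^ 2)).div_const (δ ^ 2)

/-! ### Total variation -/

section TotalVariation

variable {α : Type*} [Fintype α]

theorem TV_comm (p q : α → ℝ) : TV p q = TV q p := by simp only [TV, abs_sub_comm]

theorem TV_nonneg (p q : α → ℝ) : 0 ≤ TV p q := by unfold TV; positivity

theorem TV_triangle (p q r : α → ℝ) : TV p r ≤ TV p q + TV q r := by
  unfold TV
  rw [← add_div, ← sum_add_distrib]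
  gcongr
  exact abs_sub_le _ _ _

theorem TV_expect_le {ι : Type*} [Fintype ι] (p q : ι → α → ℝ) :
    TV (fun a => 𝔼 i, p i a) (fun a => 𝔼 i, q i a) ≤ 𝔼 i, TV (p i) (q i) := by
  unfold TV
  rw [← expect_div, expect_sum_comm]
  gcongr
  rw [← expect_sub_distrib]
  exact abs_expect_le _ _

theorem sum_filter_le_add_TV (p q : α → ℝ) (E : α → Prop) [DecidablePred E] :
    ∑ a with E a, p a ≤ ∑ a with E a, q a + 2 * TV p q := by
  have habs : ∑ a with E a, |p a - q a| ≤ 2 * TV p q := by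
    rw [TV, mul_div_cancel₀ _ two_ne_zero]
    exact sum_le_univ_sum_of_nonneg fun a => abs_nonneg _
  have hsub := (sum_le_sum fun a (_ : a ∈ ({a | E a} : Finset α)) => le_abs_self (p a - q a)).trans
    habs
  rw [sum_sub_distrib] at hsub
  linarith

end TotalVariation

/-! ### Likelihood ratios -/

section LikelihoodRatio

variable {Ω α β γ : Type*} [Fintype Ω] {p : Ω → ℝ} {f : Ω → α} {g : Ω → β}

/-- The conditional mass function `P(g = b | f = a)`; it vanishes identically when
`P(f = a) = 0`. -/
def condPMF (p : Ω → ℝ) (f : Ω → α) (g : Ω → β) (a : α) (b : β) : ℝ :=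
  pushf p (fun ω => (f ω, g ω)) (a, b) / pushf p f a

/-- The ratio of the joint mass function of `f` and `g` to the product of the marginals, whose
logarithm is the information density; it is `0` where a marginal vanishes. -/
def likelihoodRatio (p : Ω → ℝ) (f : Ω → α) (g : Ω → β) (a : α) (b : β) : ℝ :=
  pushf p (fun ω => (f ω, g ω)) (a, b) / (pushf p f a * pushf p g b)

theorem condPMF_nonneg (hp : ∀ ω, 0 ≤ p ω) (f : Ω → α) (g : Ω → β) (a : α) (b : β) :
    0 ≤ condPMF p f g a b :=
  div_nonneg (pushf_nonneg hp _ _) (pushf_nonneg hp _ _)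

theorem pushf_mul_condPMF (hp : ∀ ω, 0 ≤ p ω) (f : Ω → α) (g : Ω → β) (a : α) (b : β) :
    pushf p f a * condPMF p f g a b = pushf p (fun ω => (f ω, g ω)) (a, b) :=
  mul_div_cancel_of_imp' fun h =>
    le_antisymm (h ▸ pushf_pair_le_fst hp f g a b) (pushf_nonneg hp _ _)

theorem sum_pushf_mul_condPMF_mul [Fintype α] [Fintype β] (hp : ∀ ω, 0 ≤ p ω) (f : Ω → α)
    (g : Ω → β) (G : α → β → ℝ) :
    ∑ a, pushf p f a * ∑ b, condPMF p f g a b * G a b = ∑ ω, p ω * G (f ω) (g ω) := by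
  rw [← sum_pushf_mul p (fun ω => (f ω, g ω)) fun z => G z.1 z.2, Fintype.sum_prod_type]
  simp only [mul_sum, ← mul_assoc, pushf_mul_condPMF hp]

theorem sum_pushf_mul_condPMF [Fintype α] (hp : ∀ ω, 0 ≤ p ω) (f : Ω → α) (g : Ω → β) (b : β) :
    ∑ a, pushf p f a * condPMF p f g a b = pushf p g b := by
  simp only [pushf_mul_condPMF hp, sum_pushf_fst]

theorem likelihoodRatio_nonneg (hp : ∀ ω, 0 ≤ p ω) (f : Ω → α) (g : Ω → β) (a : α) (b : β) :
    0 ≤ likelihoodRatio p f g a b :=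
  div_nonneg (pushf_nonneg hp _ _) (mul_nonneg (pushf_nonneg hp _ _) (pushf_nonneg hp _ _))

theorem likelihoodRatio_pos (hp : ∀ ω, 0 ≤ p ω) (f : Ω → α) (g : Ω → β) {ω : Ω} (hω : 0 < p ω) :
    0 < likelihoodRatio p f g (f ω) (g ω) :=
  div_pos (pushf_pos hp (fun ω => (f ω, g ω)) hω)
    (mul_pos (pushf_pos hp f hω) (pushf_pos hp g hω))

theorem condPMF_eq_zero (hp : ∀ ω, 0 ≤ p ω) (f : Ω → α) {g : Ω → β} (a : α) {b : β}
    (h : pushf p g b = 0) : condPMF p f g a b = 0 := by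
  rw [condPMF, le_antisymm (h ▸ pushf_pair_le_snd hp f g a b) (pushf_nonneg hp _ _), zero_div]

theorem likelihoodRatio_mul_pushf (hp : ∀ ω, 0 ≤ p ω) (f : Ω → α) (g : Ω → β) (a : α) (b : β) :
    likelihoodRatio p f g a b * pushf p g b = condPMF p f g a b := by
  rw [likelihoodRatio, ← div_div]
  exact div_mul_cancel_of_imp fun h => condPMF_eq_zero hp f a h

end LikelihoodRatio

/-! ### Information measures -/

section Information

variable {Ω α β γ : Type*} [Fintype Ω] {p : Ω → ℝ}

theorem entRV_eq_neg_sum_logb [Fintype α] (p : Ω → ℝ) (f : Ω → α) :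
    entRV p f = -∑ ω, p ω * logb 2 (pushf p f (f ω)) :=
  congrArg Neg.neg (sum_pushf_mul p f fun a => logb 2 (pushf p f a))

theorem mi_eq_sum_logb [Fintype α] [Fintype β] (hp : ∀ ω, 0 ≤ p ω) (f : Ω → α) (g : Ω → β) :
    mi p f g = ∑ ω, p ω * logb 2 (likelihoodRatio p f g (f ω) (g ω)) := by
  have hsplit (ω : Ω) : p ω * logb 2 (likelihoodRatio p f g (f ω) (g ω)) =
      p ω * logb 2 (pushf p (fun ω => (f ω, g ω)) (f ω, g ω)) -
        p ω * logb 2 (pushf p f (f ω)) - p ω * logb 2 (pushf p g (g ω)) := by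
    rcases (hp ω).eq_or_lt with h | h
    · simp [← h]
    · rw [likelihoodRatio, logb_div (pushf_pos hp (fun ω => (f ω, g ω)) h).ne'
        (mul_pos (pushf_pos hp f h) (pushf_pos hp g h)).ne',
        logb_mul (pushf_pos hp f h).ne' (pushf_pos hp g h).ne']
      ring
  simp only [mi, entRV_eq_neg_sum_logb, hsplit, sum_sub_distrib]
  ring

theorem mi_add_cmi [Fintype α] [Fintype β] [Fintype γ] (p : Ω → ℝ) (f : Ω → α) (g : Ω → β)
    (h : Ω → γ) : mi p f h + cmi p f g h = mi p f fun ω => (g ω, h ω) := by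
  simp only [mi, cmi]
  ring

theorem sum_mul_logb_nonneg (hp : p ∈ stdSimplex ℝ Ω) {r : Ω → ℝ} (hr : ∀ ω, 0 < p ω → 0 < r ω)
    (hsum : ∑ ω, p ω * (r ω)⁻¹ ≤ 1) : 0 ≤ ∑ ω, p ω * logb 2 (r ω) := by
  have hlog (ω : Ω) : p ω * (1 - (r ω)⁻¹) ≤ p ω * log (r ω) := by
    rcases (hp.1 ω).eq_or_lt with h | h
    · simp [← h]
    · gcongr
      exact one_sub_inv_le_log_of_pos (hr ω h)
  have hle := sum_le_sum fun ω (_ : ω ∈ univ) => hlog ω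
  simp only [mul_sub, mul_one, sum_sub_distrib, hp.2] at hle
  simp only [logb, ← mul_div_assoc, ← sum_div]
  exact div_nonneg (by linarith) (log_nonneg one_le_two)

theorem sum_mul_likelihoodRatio [Fintype α] [Fintype β] (hp : p ∈ stdSimplex ℝ Ω) (f : Ω → α)
    (g : Ω → β) :
    ∑ a, ∑ b, pushf p f a * pushf p g b * likelihoodRatio p f g a b = 1 := by
  have hjoint (a : α) (b : β) : pushf p f a * pushf p g b * likelihoodRatio p f g a b =
      pushf p (fun ω => (f ω, g ω)) (a, b) := by
    rw [mul_assoc, mul_comm (pushf p g b), likelihoodRatio_mul_pushf hp.1, pushf_mul_condPMF hp.1]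
  simp only [hjoint, sum_pushf_snd, sum_pushf, hp.2]

theorem sum_div_likelihoodRatio_le [Fintype α] [Fintype β] (hp : ∀ ω, 0 ≤ p ω) (f : Ω → α)
    (g : Ω → β) {G : α → β → ℝ} (hG : ∀ a b, 0 ≤ G a b) :
    ∑ ω, p ω * (G (f ω) (g ω) / likelihoodRatio p f g (f ω) (g ω)) ≤
      ∑ a, ∑ b, pushf p f a * pushf p g b * G a b := by
  rw [← sum_pushf_mul p (fun ω => (f ω, g ω)) fun z => G z.1 z.2 / likelihoodRatio p f g z.1 z.2,
    ← Fintype.sum_prod_type' fun a b => pushf p f a * pushf p g b * G a b]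
  refine sum_le_sum fun ⟨a, b⟩ _ => ?_
  have hprod := mul_nonneg (pushf_nonneg hp f a) (pushf_nonneg hp g b)
  rw [mul_div_left_comm, mul_comm, likelihoodRatio, div_div_eq_mul_div]
  refine mul_le_mul_of_nonneg_right ?_ (hG a b)
  rcases eq_or_ne (pushf p (fun ω => (f ω, g ω)) (a, b)) 0 with h | h
  · simpa [h] using hprod
  · rw [mul_div_cancel_left₀ _ h]

theorem cmi_nonneg [Fintype α] [Fintype β] [Fintype γ] (hp : p ∈ stdSimplex ℝ Ω) (f : Ω → α)
    (g : Ω → β) (h : Ω → γ) : 0 ≤ cmi p f g h := by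
  set r : Ω → ℝ := fun ω => likelihoodRatio p f (fun ω => (g ω, h ω)) (f ω) (g ω, h ω) /
    likelihoodRatio p f h (f ω) (h ω)
  have hcmi : cmi p f g h = ∑ ω, p ω * logb 2 (r ω) := by
    rw [eq_sub_of_add_eq' (mi_add_cmi p f g h), mi_eq_sum_logb hp.1, mi_eq_sum_logb hp.1,
      ← sum_sub_distrib]
    refine sum_congr rfl fun ω _ => ?_
    rcases (hp.1 ω).eq_or_lt with h0 | h0
    · simp [← h0]
    · rw [← mul_sub, ← logb_div (likelihoodRatio_pos hp.1 f (fun ω => (g ω, h ω)) h0).ne'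
        (likelihoodRatio_pos hp.1 f h h0).ne']
  rw [hcmi]
  refine sum_mul_logb_nonneg hp (fun ω hω => div_pos
    (likelihoodRatio_pos hp.1 f (fun ω => (g ω, h ω)) hω) (likelihoodRatio_pos hp.1 f h hω)) ?_
  calc ∑ ω, p ω * (r ω)⁻¹
      ≤ ∑ a, ∑ z : β × γ, pushf p f a * pushf p (fun ω => (g ω, h ω)) z *
          likelihoodRatio p f h a z.2 := by
        simp only [r, inv_div]
        exact sum_div_likelihoodRatio_le hp.1 f (fun ω => (g ω, h ω))
          (G := fun a z => likelihoodRatio p f h a z.2)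
          fun a z => likelihoodRatio_nonneg hp.1 f h a z.2
    _ = ∑ a, ∑ c, pushf p f a * pushf p h c * likelihoodRatio p f h a c := by
        refine sum_congr rfl fun a _ => ?_
        rw [Fintype.sum_prod_type_right]
        simp only [← mul_sum, ← sum_mul, sum_pushf_fst]
    _ ≤ 1 := (sum_mul_likelihoodRatio hp f h).le

theorem mi_nonneg [Fintype α] [Fintype β] (hp : p ∈ stdSimplex ℝ Ω) (f : Ω → α) (g : Ω → β) :
    0 ≤ mi p f g := by
  have hconst : cmi p f g (fun _ => ()) = mi p f g := by
    simp [cmi, mi, entRV_eq_neg_sum_logb, pushf, hp.2]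
  exact hconst ▸ cmi_nonneg hp f g fun _ => ()

end Information

section AsymptoticEquipartition

variable {Ω α β : Type*} [Fintype Ω] {p : Ω → ℝ} {f : Ω → α} {g : Ω → β} {r : ℝ}

theorem likelihoodRatio_iid {J : Type*} [Fintype J] [DecidableEq J] (p : Ω → ℝ) (f : Ω → α)
    (g : Ω → β) (a : J → α) (b : J → β) :
    likelihoodRatio (iid p) (fun w : J → Ω => f ∘ w) (fun w => g ∘ w) a b =
      ∏ j, likelihoodRatio p f g (a j) (b j) := by
  simp only [likelihoodRatio, pushf_iid_pair, pushf_iid, iid, prod_div_distrib, prod_mul_distrib]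

theorem likelihoodRatio_iid_eq_rpow (hp : ∀ ω, 0 ≤ p ω) (f : Ω → α) (g : Ω → β) {n : ℕ}
    {w : Fin n → Ω} (hw : 0 < iid p w) :
    likelihoodRatio (iid p) (fun w : Fin n → Ω => f ∘ w) (fun w => g ∘ w) (f ∘ w) (g ∘ w) =
      2 ^ (n * 𝔼 t, logb 2 (likelihoodRatio p f g (f (w t)) (g (w t)))) := by
  have hcoord (t : Fin n) : 0 < p (w t) :=
    (hp _).lt_of_ne fun h => hw.ne' (prod_eq_zero (mem_univ t) h.symm)
  have hsum := Fintype.card_mul_expect fun t => logb 2 (likelihoodRatio p f g (f (w t)) (g (w t)))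
  rw [Fintype.card_fin] at hsum
  rw [hsum, rpow_sum_of_pos two_pos, likelihoodRatio_iid]
  exact prod_congr rfl fun t _ =>
    (rpow_logb two_pos (by norm_num) (likelihoodRatio_pos hp f g (hcoord t))).symm

theorem tendsto_sum_filter_lt_likelihoodRatio_iid [Fintype α] [Fintype β]
    (hp : p ∈ stdSimplex ℝ Ω) (hr : mi p f g < r) :
    Tendsto (fun n : ℕ => ∑ w : Fin n → Ω with 2 ^ (n * r) < likelihoodRatio (iid p)
      (fun w : Fin n → Ω => f ∘ w) (fun w => g ∘ w) (f ∘ w) (g ∘ w), iid p w) atTop (nhds 0) := by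
  refine squeeze_zero (fun n => sum_nonneg fun w _ => (iid_mem_stdSimplex hp).1 w) (fun n => ?_)
    (tendsto_iid_deviation hp (fun ω => logb 2 (likelihoodRatio p f g (f ω) (g ω)))
      (sub_pos.2 hr))
  refine sum_filter_le_sum_filter (iid_mem_stdSimplex hp).1 fun w hw hlt => ?_
  rw [likelihoodRatio_iid_eq_rpow hp.1 f g hw, rpow_lt_rpow_left_iff one_lt_two] at hlt
  rw [← mi_eq_sum_logb hp.1]
  exact (sub_le_sub_right (lt_of_mul_lt_mul_left hlt n.cast_nonneg).le _).trans (le_abs_self _)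

theorem tendsto_sum_filter_likelihoodRatio_iid_le [Fintype α] [Fintype β]
    (hp : p ∈ stdSimplex ℝ Ω) (hr : r < mi p f g) :
    Tendsto (fun n : ℕ => ∑ w : Fin n → Ω with likelihoodRatio (iid p)
      (fun w : Fin n → Ω => f ∘ w) (fun w => g ∘ w) (f ∘ w) (g ∘ w) ≤ 2 ^ (n * r), iid p w)
      atTop (nhds 0) := by
  refine squeeze_zero' (Eventually.of_forall fun n => sum_nonneg fun w _ =>
    (iid_mem_stdSimplex hp).1 w) ?_
    (tendsto_iid_deviation hp (fun ω => logb 2 (likelihoodRatio p f g (f ω) (g ω)))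
      (sub_pos.2 hr))
  filter_upwards [eventually_gt_atTop 0] with n hn
  refine sum_filter_le_sum_filter (iid_mem_stdSimplex hp).1 fun w hw hle => ?_
  rw [likelihoodRatio_iid_eq_rpow hp.1 f g hw, rpow_le_rpow_left_iff one_lt_two] at hle
  rw [← mi_eq_sum_logb hp.1, abs_sub_comm]
  exact (sub_le_sub_left (le_of_mul_le_mul_left hle (Nat.cast_pos.2 hn)) _).trans (le_abs_self _)

end AsymptoticEquipartition

/-! ### Soft covering -/

section SoftCovering

variable {Ω J B C I : Type*} [Fintype Ω] [Fintype I] {p : Ω → ℝ}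

/-- The total variation distance between the law of `g` and the average, over the codewords
`cw i`, of the conditional law of `g` given `f = cw i`. -/
def coveringError [Fintype C] (p : Ω → ℝ) (f : Ω → B) (g : Ω → C) (cw : I → B) : ℝ :=
  TV (pushf p g) fun z => 𝔼 i, condPMF p f g (cw i) z

theorem coveringError_nonneg [Fintype C] (p : Ω → ℝ) (f : Ω → B) (g : Ω → C) (cw : I → B) :
    0 ≤ coveringError p f g cw :=
  TV_nonneg _ _

variable [Fintype J] [DecidableEq J] [Fintype B]

-- Chebyshev's inequality is applied to the bounded part `φ` only; `ψ` is the rare large part.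
theorem sum_iid_mul_abs_sub_le_of_truncation [Nonempty I] {q : B → ℝ} (hq : q ∈ stdSimplex ℝ B)
    {e : I → J} (he : Function.Injective e) (φ : B → ℝ) {ψ : B → ℝ} (hψ : ∀ b, 0 ≤ ψ b) :
    ∑ c, iid q c * |∑ b, q b * (φ b + ψ b) - 𝔼 i, (φ (c (e i)) + ψ (c (e i)))| ≤
      √((∑ b, q b * φ b ^ 2) / Fintype.card I) + 2 * ∑ b, q b * ψ b := by
  have hw := iid_mem_stdSimplex (J := J) hq
  have hmean : ∑ c, iid q c * 𝔼 i, ψ (c (e i)) = ∑ b, q b * ψ b := by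
    simp only [mul_expect, ← expect_sum_comm, sum_iid_mul hq.2, Fintype.expect_const]
  have hsplit (c : J → B) : |∑ b, q b * (φ b + ψ b) - 𝔼 i, (φ (c (e i)) + ψ (c (e i)))| ≤
      |𝔼 i, φ (c (e i)) - ∑ b, q b * φ b| + ∑ b, q b * ψ b + 𝔼 i, ψ (c (e i)) := by
    have hq0 : 0 ≤ ∑ b, q b * ψ b := sum_nonneg fun b _ => mul_nonneg (hq.1 b) (hψ b)
    have he0 : 0 ≤ 𝔼 i, ψ (c (e i)) := expect_nonneg fun i _ => hψ _
    simp only [mul_add, sum_add_distrib, expect_add_distrib]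
    rw [abs_le]
    constructor <;>
      linarith [neg_abs_le (𝔼 i, φ (c (e i)) - ∑ b, q b * φ b),
        le_abs_self (𝔼 i, φ (c (e i)) - ∑ b, q b * φ b)]
  calc _ ≤ ∑ c, iid q c * (|𝔼 i, φ (c (e i)) - ∑ b, q b * φ b| + ∑ b, q b * ψ b +
          𝔼 i, ψ (c (e i))) :=
        sum_le_sum fun c _ => mul_le_mul_of_nonneg_left (hsplit c) (hw.1 c)
    _ = ∑ c, iid q c * |𝔼 i, φ (c (e i)) - ∑ b, q b * φ b| + 2 * ∑ b, q b * ψ b := by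
        simp only [mul_add, sum_add_distrib, hmean, ← sum_mul, hw.2]
        ring
    _ ≤ _ := by gcongr; exact sum_iid_mul_abs_le hq he φ

theorem sum_filter_mul_condPMF_sq_le (hp : ∀ ω, 0 ≤ p ω) (f : Ω → B) (g : Ω → C) {τ : ℝ}
    (hτ : 0 ≤ τ) (z : C) :
    ∑ b with likelihoodRatio p f g b z ≤ τ, pushf p f b * condPMF p f g b z ^ 2 ≤
      τ * pushf p g z ^ 2 := by
  have hz : 0 ≤ pushf p g z := pushf_nonneg hp g z
  have hterm (b : B) : 0 ≤ pushf p f b * condPMF p f g b z :=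
    mul_nonneg (pushf_nonneg hp f b) (condPMF_nonneg hp f g b z)
  calc ∑ b with likelihoodRatio p f g b z ≤ τ, pushf p f b * condPMF p f g b z ^ 2
      ≤ ∑ b with likelihoodRatio p f g b z ≤ τ,
          τ * pushf p g z * (pushf p f b * condPMF p f g b z) := by
        refine sum_le_sum fun b hb => ?_
        calc pushf p f b * condPMF p f g b z ^ 2
            = likelihoodRatio p f g b z * pushf p g z * (pushf p f b * condPMF p f g b z) := by
              rw [likelihoodRatio_mul_pushf hp]; ring
          _ ≤ _ := by gcongr; exacts [hterm b, (mem_filter.1 hb).2]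
    _ ≤ ∑ b, τ * pushf p g z * (pushf p f b * condPMF p f g b z) :=
        sum_le_univ_sum_of_nonneg fun b => mul_nonneg (mul_nonneg hτ hz) (hterm b)
    _ = τ * pushf p g z ^ 2 := by rw [← mul_sum, sum_pushf_mul_condPMF hp]; ring

theorem sum_iid_mul_abs_sub_expect_condPMF_le [Nonempty I] (hp : p ∈ stdSimplex ℝ Ω) (f : Ω → B)
    (g : Ω → C) {e : I → J} (he : Function.Injective e) {τ : ℝ} (hτ : 0 ≤ τ) (z : C) :
    ∑ c, iid (pushf p f) c * |pushf p g z - 𝔼 i, condPMF p f g (c (e i)) z| ≤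
      √(τ / Fintype.card I) * pushf p g z + 2 * ∑ b, pushf p f b *
        if τ < likelihoodRatio p f g b z then condPMF p f g b z else 0 := by
  set φ : B → ℝ := fun b => if likelihoodRatio p f g b z ≤ τ then condPMF p f g b z else 0
  set ψ : B → ℝ := fun b => if τ < likelihoodRatio p f g b z then condPMF p f g b z else 0
  have hV (b : B) : condPMF p f g b z = φ b + ψ b := by
    rcases le_or_gt (likelihoodRatio p f g b z) τ with h | h
    · simp [φ, ψ, h, h.not_gt]
    · simp [φ, ψ, h, h.not_ge]
  have hψ (b : B) : 0 ≤ ψ b := by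
    simp only [ψ]; split_ifs; exacts [condPMF_nonneg hp.1 f g b z, le_rfl]
  have hφ : ∑ b, pushf p f b * φ b ^ 2 ≤ τ * pushf p g z ^ 2 := by
    simpa [φ, sum_filter, ite_pow] using sum_filter_mul_condPMF_sq_le hp.1 f g hτ z
  have hcov := sum_iid_mul_abs_sub_le_of_truncation (pushf_mem_stdSimplex hp f) he φ hψ
  simp only [← hV, sum_pushf_mul_condPMF hp.1] at hcov
  refine hcov.trans ?_
  gcongr
  calc √((∑ b, pushf p f b * φ b ^ 2) / Fintype.card I)
      ≤ √(τ / Fintype.card I * pushf p g z ^ 2) := by rw [div_mul_eq_mul_div]; gcongr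
    _ = √(τ / Fintype.card I) * pushf p g z := by
        rw [sqrt_mul' _ (sq_nonneg _), sqrt_sq (pushf_nonneg hp.1 g z)]

theorem sum_iid_mul_coveringError_le [Fintype C] [Nonempty I] (hp : p ∈ stdSimplex ℝ Ω) (f : Ω → B)
    (g : Ω → C) {e : I → J} (he : Function.Injective e) {τ : ℝ} (hτ : 0 ≤ τ) :
    ∑ c, iid (pushf p f) c * coveringError p f g (c ∘ e) ≤
      ∑ ω with τ < likelihoodRatio p f g (f ω) (g ω), p ω + √(τ / Fintype.card I) / 2 := by
  have hlarge : ∑ z, ∑ b, pushf p f b *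
      (if τ < likelihoodRatio p f g b z then condPMF p f g b z else 0) =
        ∑ ω with τ < likelihoodRatio p f g (f ω) (g ω), p ω := by
    rw [sum_comm]
    simp only [← mul_sum]
    simpa [sum_filter] using sum_pushf_mul_condPMF_mul hp.1 f g fun b z =>
      if τ < likelihoodRatio p f g b z then 1 else 0
  calc ∑ c, iid (pushf p f) c * coveringError p f g (c ∘ e)
      = (∑ z, ∑ c, iid (pushf p f) c * |pushf p g z - 𝔼 i, condPMF p f g (c (e i)) z|) / 2 := by
        rw [sum_comm, sum_div]
        simp only [coveringError, TV, ← mul_sum, mul_div_assoc, Function.comp_apply]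
    _ ≤ (∑ z, (√(τ / Fintype.card I) * pushf p g z + 2 * ∑ b, pushf p f b *
          if τ < likelihoodRatio p f g b z then condPMF p f g b z else 0)) / 2 := by
        gcongr with z
        exact sum_iid_mul_abs_sub_expect_condPMF_le hp f g he hτ z
    _ = _ := by
        rw [sum_add_distrib, ← mul_sum, ← mul_sum, sum_pushf, hp.2, hlarge]
        ring

end SoftCovering

/-! ### Packing -/

section Packing

variable {Ω J B C I : Type*} [Fintype Ω] [Fintype J] [DecidableEq J] [Fintype C] [Fintype I]
  {p : Ω → ℝ}

theorem sum_filter_pushf_mul_pushf_le [Fintype B] (hp : p ∈ stdSimplex ℝ Ω) (f : Ω → B)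
    (g : Ω → C) {τ : ℝ} (hτ : 0 < τ) :
    ∑ b, ∑ z with τ < likelihoodRatio p f g b z, pushf p f b * pushf p g z ≤ τ⁻¹ := by
  rw [← one_div, le_div_iff₀ hτ, sum_mul, ← sum_mul_likelihoodRatio hp f g]
  refine sum_le_sum fun b _ => ?_
  have hprod (z : C) : 0 ≤ pushf p f b * pushf p g z :=
    mul_nonneg (pushf_nonneg hp.1 f b) (pushf_nonneg hp.1 g z)
  rw [sum_mul]
  refine (sum_le_sum fun z hz =>
    mul_le_mul_of_nonneg_left (mem_filter.1 hz).2.le (hprod z)).trans ?_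
  exact sum_le_univ_sum_of_nonneg fun z =>
    mul_nonneg (hprod z) (likelihoodRatio_nonneg hp.1 f g b z)

/-- The probability that a threshold test on the likelihood ratio fails when the codeword `b` is
transmitted through the channel from `f` to `g`: either `b` itself is rejected or one of the
competing codewords `b' i` is accepted. -/
def confusionError (p : Ω → ℝ) (f : Ω → B) (g : Ω → C) (τ : ℝ) (b : B) (b' : I → B) : ℝ :=
  ∑ z with likelihoodRatio p f g b z ≤ τ ∨ ∃ i, τ < likelihoodRatio p f g (b' i) z,
    condPMF p f g b z

theorem confusionError_nonneg (hp : ∀ ω, 0 ≤ p ω) (f : Ω → B) (g : Ω → C) (τ : ℝ) (b : B)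
    (b' : I → B) : 0 ≤ confusionError p f g τ b b' :=
  sum_nonneg fun z _ => condPMF_nonneg hp f g b z

theorem confusionError_le_add_sum (hp : ∀ ω, 0 ≤ p ω) (f : Ω → B) (g : Ω → C) (τ : ℝ) (b : B)
    (b' : I → B) :
    confusionError p f g τ b b' ≤ ∑ z with likelihoodRatio p f g b z ≤ τ, condPMF p f g b z +
      ∑ i, ∑ z with τ < likelihoodRatio p f g (b' i) z, condPMF p f g b z := by
  have hV := condPMF_nonneg hp f g b
  simp only [confusionError, sum_filter]
  rw [sum_comm, ← sum_add_distrib]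
  refine sum_le_sum fun z _ => ?_
  have hite (i : I) : 0 ≤ if τ < likelihoodRatio p f g (b' i) z then condPMF p f g b z else 0 := by
    split_ifs; exacts [hV z, le_rfl]
  have hsum := sum_nonneg fun i (_ : i ∈ univ) => hite i
  by_cases hb : likelihoodRatio p f g b z ≤ τ
  · simpa [hb] using hsum
  · by_cases hex : ∃ i, τ < likelihoodRatio p f g (b' i) z
    · obtain ⟨i, hi⟩ := hex
      have hle := single_le_sum (fun i _ => hite i) (mem_univ i)
      rw [if_pos hi] at hle
      rw [if_pos (Or.inr ⟨i, hi⟩), if_neg hb, zero_add]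
      exact hle
    · simpa [hb, hex] using hsum

theorem sum_iid_mul_confusion_le [Fintype B] (hp : p ∈ stdSimplex ℝ Ω) (f : Ω → B) (g : Ω → C)
    {τ : ℝ} (hτ : 0 < τ) {i j : J} (hij : i ≠ j) :
    ∑ c, iid (pushf p f) c * ∑ z with τ < likelihoodRatio p f g (c i) z, condPMF p f g (c j) z ≤
      τ⁻¹ := by
  have hq := pushf_mem_stdSimplex hp f
  calc _ = ∑ z, ∑ c, iid (pushf p f) c * ((if τ < likelihoodRatio p f g (c i) z then 1 else 0) *
          condPMF p f g (c j) z) := by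
        rw [sum_comm]
        simp [mul_sum, sum_filter]
    _ = ∑ z, (∑ b, pushf p f b * if τ < likelihoodRatio p f g b z then 1 else 0) *
          pushf p g z := by
        refine sum_congr rfl fun z _ => ?_
        rw [sum_iid_mul_mul hq.2 hij (fun b => if τ < likelihoodRatio p f g b z then 1 else 0)
          (condPMF p f g · z), sum_pushf_mul_condPMF hp.1]
    _ = ∑ b, ∑ z with τ < likelihoodRatio p f g b z, pushf p f b * pushf p g z := by
        simp only [sum_mul, sum_filter, mul_ite, ite_mul, mul_one, mul_zero, zero_mul]
        rw [sum_comm]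
    _ ≤ τ⁻¹ := sum_filter_pushf_mul_pushf_le hp f g hτ

theorem sum_iid_mul_confusionError_le [Fintype B] (hp : p ∈ stdSimplex ℝ Ω) (f : Ω → B)
    (g : Ω → C) {τ : ℝ} (hτ : 0 < τ) {j : J} {e : I → J} (he : ∀ i, e i ≠ j) :
    ∑ c, iid (pushf p f) c * confusionError p f g τ (c j) (c ∘ e) ≤
      ∑ ω with likelihoodRatio p f g (f ω) (g ω) ≤ τ, p ω + Fintype.card I / τ := by
  have hq := pushf_mem_stdSimplex hp f
  have hmiss : ∑ b, pushf p f b * ∑ z with likelihoodRatio p f g b z ≤ τ, condPMF p f g b z =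
      ∑ ω with likelihoodRatio p f g (f ω) (g ω) ≤ τ, p ω := by
    simpa [sum_filter] using sum_pushf_mul_condPMF_mul hp.1 f g fun b z =>
      if likelihoodRatio p f g b z ≤ τ then 1 else 0
  calc ∑ c, iid (pushf p f) c * confusionError p f g τ (c j) (c ∘ e)
      ≤ ∑ c, iid (pushf p f) c *
          (∑ z with likelihoodRatio p f g (c j) z ≤ τ, condPMF p f g (c j) z +
            ∑ i, ∑ z with τ < likelihoodRatio p f g (c (e i)) z, condPMF p f g (c j) z) :=
        sum_le_sum fun c _ => mul_le_mul_of_nonneg_left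
          (confusionError_le_add_sum hp.1 f g τ (c j) (c ∘ e)) ((iid_mem_stdSimplex hq).1 c)
    _ = ∑ ω with likelihoodRatio p f g (f ω) (g ω) ≤ τ, p ω + ∑ i, ∑ c, iid (pushf p f) c *
          ∑ z with τ < likelihoodRatio p f g (c (e i)) z, condPMF p f g (c j) z := by
        simp only [mul_add, sum_add_distrib, mul_sum (ι := I)]
        rw [sum_iid_mul hq.2 j fun b => ∑ z with likelihoodRatio p f g b z ≤ τ, condPMF p f g b z,
          hmiss, sum_comm]
    _ ≤ ∑ ω with likelihoodRatio p f g (f ω) (g ω) ≤ τ, p ω + ∑ _i : I, τ⁻¹ := by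
        gcongr with i
        exact sum_iid_mul_confusion_le hp f g hτ (he i)
    _ = _ := by simp [div_eq_mul_inv]

end Packing

/-! ### Likelihood encoding -/

section LikelihoodEncoder

variable {A B C Λ : Type*} [Fintype Λ] {v : Λ → ℝ}

/-- The mass function proportional to the weights `v`, or the uniform one if `v` sums to `0`. -/
def normalizeMass (v : Λ → ℝ) (l : Λ) : ℝ :=
  if ∑ l', v l' = 0 then (Fintype.card Λ : ℝ)⁻¹ else v l / ∑ l', v l'

theorem normalizeMass_mem_stdSimplex [Nonempty Λ] (hv : ∀ l, 0 ≤ v l) :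
    normalizeMass v ∈ stdSimplex ℝ Λ := by
  by_cases h : ∑ l, v l = 0
  · exact ⟨fun l => by simp [normalizeMass, h], by simp [normalizeMass, h]⟩
  · refine ⟨fun l => ?_, ?_⟩
    · rw [normalizeMass, if_neg h]
      exact div_nonneg (hv l) (sum_nonneg fun l _ => hv l)
    · simp only [normalizeMass, if_neg h, ← sum_div]
      exact div_self h

theorem sum_mul_normalizeMass (hv : ∀ l, 0 ≤ v l) (l : Λ) :
    (∑ l', v l') * normalizeMass v l = v l := by
  rw [normalizeMass]
  split_ifs with h
  · rw [h, zero_mul, (sum_eq_zero_iff_of_nonneg fun l _ => hv l).1 h l (mem_univ l)]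
  · exact mul_div_cancel₀ _ h

/-- The stochastic encoder which, on observing the state `a`, draws a codeword `cw l` with
probability proportional to its likelihood `V (cw l) a`. -/
def likelihoodEncoder (V : B → A → ℝ) (cw : Λ → B) (a : A) : B → ℝ :=
  pushf (normalizeMass fun l => V (cw l) a) cw

theorem likelihoodEncoder_mem_stdSimplex [Fintype B] [Nonempty Λ] {V : B → A → ℝ}
    (hV : ∀ b a, 0 ≤ V b a) (cw : Λ → B) (a : A) :
    likelihoodEncoder V cw a ∈ stdSimplex ℝ B :=
  pushf_mem_stdSimplex (normalizeMass_mem_stdSimplex fun l => hV (cw l) a) cw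

/-- The joint law of the output and the state when the state has law `P` and the input of the
channel `W` is drawn from `φ a` in state `a`. -/
def outputLaw [Fintype B] (P : A → ℝ) (φ : A → B → ℝ) (W : B → A → C → ℝ) (z : C × A) : ℝ :=
  P z.2 * ∑ b, φ z.2 b * W b z.2 z.1

theorem outputLaw_likelihoodEncoder [Fintype B] {V : B → A → ℝ} (hV : ∀ b a, 0 ≤ V b a)
    (cw : Λ → B) (W : B → A → C → ℝ) (z : C × A) :
    outputLaw (fun a => 𝔼 l, V (cw l) a) (likelihoodEncoder V cw) W z =
      𝔼 l, V (cw l) z.2 * W (cw l) z.2 z.1 := by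
  simp only [outputLaw, likelihoodEncoder, sum_pushf_mul _ cw fun b => W b z.2 z.1,
    Fintype.expect_eq_sum_div_card]
  rw [div_mul_eq_mul_div, mul_sum]
  simp only [← mul_assoc, sum_mul_normalizeMass fun l => hV (cw l) z.2]

theorem TV_outputLaw [Fintype A] [Fintype B] [Fintype C] (P Q : A → ℝ) {φ : A → B → ℝ}
    (hφ : ∀ a, φ a ∈ stdSimplex ℝ B) {W : B → A → C → ℝ} (hW : ∀ b a, W b a ∈ stdSimplex ℝ C) :
    TV (outputLaw P φ W) (outputLaw Q φ W) = TV P Q := by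
  have hnonneg (a : A) (y : C) : 0 ≤ ∑ b, φ a b * W b a y :=
    sum_nonneg fun b _ => mul_nonneg ((hφ a).1 b) ((hW b a).1 y)
  have hone (a : A) : ∑ y, ∑ b, φ a b * W b a y = 1 := by
    rw [sum_comm]
    simp only [← mul_sum, (hW _ a).2, mul_one, (hφ a).2]
  simp only [TV, outputLaw, ← sub_mul, abs_mul, abs_of_nonneg (hnonneg _ _)]
  rw [Fintype.sum_prod_type_right]
  simp only [← mul_sum, hone, mul_one]

end LikelihoodEncoder

/-! ### Covert codes -/

section CovertCode

variable {A B C : Type*} [Fintype B] {M K : ℕ} {P : A → ℝ} {W : B → A → C → ℝ} {T : C × A → ℝ}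
  {f : A → Fin M → Fin K → B → ℝ} {g : C → Fin K → Fin M} {ε ε' : ℝ}

/-- The joint law of state, message, key, codeword and output when the state has law `P`, the
message and the key are uniform, and the encoder `f` is followed by the channel `W`. -/
def codeLaw (P : A → ℝ) (W : B → A → C → ℝ) (f : A → Fin M → Fin K → B → ℝ)
    (z : A × Fin M × Fin K × B × C) : ℝ :=
  P z.1 * (1 / (M : ℝ)) * (1 / (K : ℝ)) * f z.1 z.2.1 z.2.2.1 z.2.2.2.1 *
    W z.2.2.2.1 z.1 z.2.2.2.2

/-- The stochastic encoder `f` and the decoder `g` form a code with average error probability at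
most `ε` such that, for every message, the joint law of output and state is `ε`-close to the covert
target `T`. -/
structure IsCovertCode [Fintype A] [Fintype C] (P : A → ℝ) (W : B → A → C → ℝ) (T : C × A → ℝ)
    (f : A → Fin M → Fin K → B → ℝ) (g : C → Fin K → Fin M) (ε : ℝ) : Prop where
  encoder_mem (a : A) (m : Fin M) (k : Fin K) : f a m k ∈ stdSimplex ℝ B
  error_le : (∑ z : A × Fin M × Fin K × B × C,
    if g z.2.2.2.2 z.2.2.1 ≠ z.2.1 then codeLaw P W f z else 0) ≤ ε
  TV_le (m : Fin M) :
    TV (fun z : C × A => (M : ℝ) * ∑ k, ∑ b, codeLaw P W f (z.2, m, k, b, z.1)) T ≤ ε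

theorem IsCovertCode.mono [Fintype A] [Fintype C] (h : IsCovertCode P W T f g ε)
    (hε : ε ≤ ε') : IsCovertCode P W T f g ε' :=
  ⟨h.encoder_mem, h.error_le.trans hε, fun m => (h.TV_le m).trans hε⟩

theorem sum_codeLaw_eq_expect_outputLaw (hM : 0 < M) (P : A → ℝ) (W : B → A → C → ℝ)
    (f : A → Fin M → Fin K → B → ℝ) (m : Fin M) (z : C × A) :
    (M : ℝ) * ∑ k, ∑ b, codeLaw P W f (z.2, m, k, b, z.1) =
      𝔼 k, outputLaw P (fun a => f a m k) W z := by
  have hM' : (M : ℝ) ≠ 0 := by positivity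
  simp only [codeLaw, outputLaw, Fintype.expect_eq_sum_div_card, Fintype.card_fin, mul_sum, sum_div]
  refine sum_congr rfl fun k _ => sum_congr rfl fun b _ => ?_
  field_simp

theorem sum_error_codeLaw_eq_expect [Fintype A] [Fintype C] (P : A → ℝ) (W : B → A → C → ℝ)
    (f : A → Fin M → Fin K → B → ℝ) (g : C → Fin K → Fin M) :
    (∑ z : A × Fin M × Fin K × B × C,
      if g z.2.2.2.2 z.2.2.1 ≠ z.2.1 then codeLaw P W f z else 0) =
        𝔼 m, 𝔼 k, ∑ z with g z.1 k ≠ m, outputLaw P (fun a => f a m k) W z := by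
  simp only [Fintype.expect_eq_sum_div_card, Fintype.card_fin, sum_filter, Fintype.sum_prod_type]
  rw [sum_comm, sum_div]
  refine sum_congr rfl fun m _ => ?_
  rw [sum_comm, sum_div, sum_div]
  refine sum_congr rfl fun k _ => ?_
  rw [sum_comm (s := (univ : Finset C)), sum_div, sum_div]
  refine sum_congr rfl fun a _ => ?_
  rw [sum_comm, sum_div, sum_div]
  refine sum_congr rfl fun y _ => ?_
  simp only [codeLaw, outputLaw, mul_sum, div_eq_mul_inv, one_mul]
  split_ifs
  · simp only [sum_mul]
    exact sum_congr rfl fun b _ => by ring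
  · simp

theorem isCovertCode_of_forall_message [Fintype A] [Fintype C] (hM : 0 < M)
    (hf : ∀ a m k, f a m k ∈ stdSimplex ℝ B)
    (herr : ∀ m, 𝔼 k, ∑ z with g z.1 k ≠ m, outputLaw P (fun a => f a m k) W z ≤ ε)
    (hTV : ∀ m, TV (fun z => 𝔼 k, outputLaw P (fun a => f a m k) W z) T ≤ ε) :
    IsCovertCode P W T f g ε where
  encoder_mem := hf
  error_le := by
    have : NeZero M := ⟨hM.ne'⟩
    rw [sum_error_codeLaw_eq_expect]
    exact expect_le univ_nonempty fun m _ => herr m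
  TV_le m := by simpa only [sum_codeLaw_eq_expect_outputLaw hM] using hTV m

end CovertCode

/-! ### One-shot achievability -/

section OneShot

theorem exists_le_of_sum_mul_le {Ω : Type*} [Fintype Ω] {p F : Ω → ℝ} (hp : p ∈ stdSimplex ℝ Ω)
    {γ : ℝ} (h : ∑ ω, p ω * F ω ≤ γ) : ∃ ω, F ω ≤ γ := by
  by_contra! hF
  have hterm (ω : Ω) : 0 ≤ p ω * (F ω - γ) := mul_nonneg (hp.1 ω) (sub_nonneg.2 (hF ω).le)
  have hsum : ∑ ω, p ω * (F ω - γ) ≤ 0 := by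
    simpa [mul_sub, ← sum_mul, hp.2] using h
  have hzero (ω : Ω) : p ω = 0 :=
    (mul_eq_zero.1 ((sum_eq_zero_iff_of_nonneg fun ω _ => hterm ω).1
      (hsum.antisymm (sum_nonneg fun ω _ => hterm ω)) ω (mem_univ ω))).resolve_right
        (sub_pos.2 (hF ω)).ne'
  simpa [hzero] using hp.2

theorem exists_injective_forall_le_of_expect_le {ι : Type*} [Fintype ι] {M : ℕ}
    (hM : 2 * M = Fintype.card ι) {v : ι → ℝ} (hv : ∀ i, 0 ≤ v i) {γ : ℝ} (hγ : 0 < γ)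
    (h : 𝔼 i, v i ≤ γ) : ∃ e : Fin M → ι, Function.Injective e ∧ ∀ m, v (e m) ≤ 2 * γ := by
  have hbad : #{i | ¬v i ≤ 2 * γ} ≤ M := by
    have hcard : (#{i | ¬v i ≤ 2 * γ} : ℝ) * (2 * γ) ≤ M * (2 * γ) := by
      calc (#{i | ¬v i ≤ 2 * γ} : ℝ) * (2 * γ) ≤ ∑ i with ¬v i ≤ 2 * γ, v i := by
            rw [← nsmul_eq_mul]
            exact card_nsmul_le_sum _ _ _ fun i hi => (not_le.1 (mem_filter.1 hi).2).le
        _ ≤ ∑ i, v i := sum_le_univ_sum_of_nonneg hv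
        _ = Fintype.card ι * 𝔼 i, v i := (Fintype.card_mul_expect v).symm
        _ ≤ Fintype.card ι * γ := by gcongr
        _ = M * (2 * γ) := by rw [← hM]; push_cast; ring
    exact_mod_cast le_of_mul_le_mul_right hcard (by positivity)
  have hgood : M ≤ Fintype.card {i // v i ≤ 2 * γ} := by
    have hsplit := card_filter_add_card_filter_not (s := (univ : Finset ι)) fun i => v i ≤ 2 * γ
    rw [Fintype.card_subtype]
    rw [card_univ] at hsplit
    omega
  obtain ⟨e⟩ := Function.Embedding.nonempty_of_card_le ((Fintype.card_fin M).trans_le hgood)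
  exact ⟨fun m => e m, Subtype.val_injective.comp e.injective, fun m => (e m).2⟩

variable {Ω A B C ι κ Λ : Type*} [Fintype Ω] {p : Ω → ℝ} {s : Ω → A} {u : Ω → B} {x : Ω → C}
  {W : B → A → C → ℝ}

/-- `x` is the output of the channel `W` with input `u` and state `s`, i.e. `W` is the conditional
law of `x` given `u` and `s`. -/
def IsChannelOutput (p : Ω → ℝ) (s : Ω → A) (u : Ω → B) (x : Ω → C) (W : B → A → C → ℝ) : Prop :=
  ∀ b y a, pushf p (fun ω => (u ω, x ω, s ω)) (b, y, a) =
    pushf p (fun ω => (u ω, s ω)) (b, a) * W b a y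

theorem IsChannelOutput.condPMF_eq (hlaw : IsChannelOutput p s u x W) (b : B) (z : C × A) :
    condPMF p u (fun ω => (x ω, s ω)) b z = condPMF p u s b z.2 * W b z.2 z.1 := by
  rw [condPMF, condPMF, hlaw b z.1 z.2, div_mul_eq_mul_div]

theorem sum_filter_condPMF_fst [Fintype A] [Fintype C] (p : Ω → ℝ) (u : Ω → B) (x : Ω → C)
    (s : Ω → A) (b : B) (E : C → Prop) [DecidablePred E] :
    ∑ z with E z.1, condPMF p u (fun ω => (x ω, s ω)) b z = ∑ y with E y, condPMF p u x b y := by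
  have hmarg (y : C) : ∑ a, condPMF p u (fun ω => (x ω, s ω)) b (y, a) = condPMF p u x b y := by
    simp only [condPMF, ← sum_div]
    congr 1
    simpa [pushf, and_assoc] using
      sum_pushf_snd p (fun ω => (u ω, x ω)) s (b, y)
  simp only [sum_filter, Fintype.sum_prod_type]
  refine sum_congr rfl fun y _ => ?_
  split_ifs
  · exact hmarg y
  · exact sum_const_zero

/-- Decode to a message one of whose codewords passes the threshold test against the output;
the choice is arbitrary if there is no such message or more than one. -/
def thresholdDecoder [Nonempty ι] (p : Ω → ℝ) (u : Ω → B) (x : Ω → C) (τ : ℝ)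
    (c : ι × κ × Λ → B) (y : C) (k : κ) : ι :=
  Classical.epsilon fun m => ∃ l, τ < likelihoodRatio p u x (c (m, k, l)) y

theorem thresholdDecoder_eq [Nonempty ι] {τ : ℝ} {c : ι × κ × Λ → B} {y : C} {m : ι} {k : κ}
    {l : Λ} (hm : τ < likelihoodRatio p u x (c (m, k, l)) y)
    (hother : ∀ i : {m' // m' ≠ m} × Λ, likelihoodRatio p u x (c (i.1, k, i.2)) y ≤ τ) :
    thresholdDecoder p u x τ c y k = m := by
  obtain ⟨l', hl'⟩ : ∃ l', τ < likelihoodRatio p u x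
      (c (thresholdDecoder p u x τ c y k, k, l')) y :=
    Classical.epsilon_spec (p := fun m => ∃ l, τ < likelihoodRatio p u x (c (m, k, l)) y)
      ⟨m, l, hm⟩
  by_contra hne
  exact (hother (⟨_, hne⟩, l')).not_gt hl'

/-- An upper bound on the expected defect of a random codebook with `N` messages, `K` keys and `L`
codewords per message and key: the packing error with decoding threshold `τ₃`, and the covering
errors of the state and of the output-state pair, with likelihood ratios truncated at `τ₁` and
`τ₂`. -/
def randomCodingBound (p : Ω → ℝ) (s : Ω → A) (u : Ω → B) (x : Ω → C) (τ₁ τ₂ τ₃ : ℝ)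
    (N K L : ℕ) : ℝ :=
  ∑ ω with likelihoodRatio p u x (u ω) (x ω) ≤ τ₃, p ω + N * L / τ₃ +
    2 * (∑ ω with τ₁ < likelihoodRatio p u s (u ω) (s ω), p ω + √(τ₁ / L) / 2) +
    (∑ ω with τ₂ < likelihoodRatio p u (fun ω => (x ω, s ω)) (u ω) (x ω, s ω), p ω +
      √(τ₂ / (K * L)) / 2)

theorem randomCodingBound_pos (hp : ∀ ω, 0 ≤ p ω) (s : Ω → A) (u : Ω → B) (x : Ω → C) (τ₁ τ₂ : ℝ)
    {τ₃ : ℝ} (hτ₃ : 0 < τ₃) (N K L : ℕ) [NeZero N] [NeZero L] :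
    0 < randomCodingBound p s u x τ₁ τ₂ τ₃ N K L := by
  have hsum (E : Ω → Prop) [DecidablePred E] : 0 ≤ ∑ ω with E ω, p ω := sum_nonneg fun ω _ => hp ω
  have hratio : 0 < N * L / τ₃ :=
    div_pos (mul_pos (Nat.cast_pos.2 (NeZero.pos N)) (Nat.cast_pos.2 (NeZero.pos L))) hτ₃
  have hcov₁ : 0 ≤ √(τ₁ / L) / 2 := by positivity
  have hcov₂ : 0 ≤ √(τ₂ / (K * L)) / 2 := by positivity
  unfold randomCodingBound
  linarith [hsum fun ω => likelihoodRatio p u x (u ω) (x ω) ≤ τ₃,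
    hsum fun ω => τ₁ < likelihoodRatio p u s (u ω) (s ω),
    hsum fun ω => τ₂ < likelihoodRatio p u (fun ω => (x ω, s ω)) (u ω) (x ω, s ω)]

variable [Fintype A] [Fintype C] [Fintype Λ]

/-- An upper bound, for the message `m` and the codebook `c`, both for the error probability of
likelihood encoding with threshold decoding and for the distance from the covert target. -/
def codebookDefect [Fintype ι] [DecidableEq ι] [Fintype κ] (p : Ω → ℝ) (s : Ω → A) (u : Ω → B)
    (x : Ω → C) (τ : ℝ) (c : ι × κ × Λ → B) (m : ι) : ℝ :=
  𝔼 k, 𝔼 l, confusionError p u x τ (c (m, k, l)) (fun i : {m' // m' ≠ m} × Λ => c (i.1, k, i.2)) +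
    2 * 𝔼 k, coveringError p u s (fun l => c (m, k, l)) +
    coveringError p u (fun ω => (x ω, s ω)) fun i : κ × Λ => c (m, i)

theorem TV_outputLaw_likelihoodEncoder [Fintype B] [Nonempty Λ] (hp : ∀ ω, 0 ≤ p ω)
    (hW : ∀ b a, W b a ∈ stdSimplex ℝ C)
    (hlaw : IsChannelOutput p s u x W) (cw : Λ → B) :
    TV (outputLaw (pushf p s) (likelihoodEncoder (condPMF p u s) cw) W)
      (fun z => 𝔼 l, condPMF p u (fun ω => (x ω, s ω)) (cw l) z) = coveringError p u s cw := by
  have hV := condPMF_nonneg hp u s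
  simp only [hlaw.condPMF_eq, ← outputLaw_likelihoodEncoder hV]
  exact TV_outputLaw _ _ (likelihoodEncoder_mem_stdSimplex hV cw) hW

theorem codebookDefect_nonneg [Fintype ι] [DecidableEq ι] [Fintype κ] (hp : ∀ ω, 0 ≤ p ω)
    (s : Ω → A) (u : Ω → B) (x : Ω → C) (τ : ℝ) (c : ι × κ × Λ → B) (m : ι) :
    0 ≤ codebookDefect p s u x τ c m :=
  add_nonneg (add_nonneg
    (expect_nonneg fun _ _ => expect_nonneg fun _ _ => confusionError_nonneg hp _ _ _ _ _)
    (mul_nonneg zero_le_two (expect_nonneg fun _ _ => coveringError_nonneg _ _ _ _)))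
    (coveringError_nonneg _ _ _ _)

theorem codebookDefect_comp_le [Fintype ι] [DecidableEq ι] [Fintype κ] {ι' : Type*} [Fintype ι']
    [DecidableEq ι'] (hp : ∀ ω, 0 ≤ p ω) (s : Ω → A) (u : Ω → B) (x : Ω → C) (τ : ℝ)
    (c : ι × κ × Λ → B) {e : ι' → ι} (he : Function.Injective e) (m : ι') :
    codebookDefect p s u x τ (fun i => c (e i.1, i.2)) m ≤ codebookDefect p s u x τ c (e m) := by
  unfold codebookDefect
  gcongr
  refine sum_le_sum_of_subset_of_nonneg (monotone_filter_right _ fun y _ hy => hy.imp_right ?_)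
    fun _ _ _ => condPMF_nonneg hp _ _ _ _
  rintro ⟨i, hi⟩
  exact ⟨(⟨e i.1, he.ne i.1.2⟩, i.2), hi⟩

theorem sum_thresholdDecoder_ne_le [Fintype B] [Fintype ι] [DecidableEq ι] [Nonempty ι] [Nonempty Λ]
    (hp : ∀ ω, 0 ≤ p ω) (hW : ∀ b a, W b a ∈ stdSimplex ℝ C)
    (hlaw : IsChannelOutput p s u x W) (τ : ℝ) (c : ι × κ × Λ → B) (m : ι) (k : κ) :
    ∑ z with thresholdDecoder p u x τ c z.1 k ≠ m,
        outputLaw (pushf p s) (likelihoodEncoder (condPMF p u s) fun l => c (m, k, l)) W z ≤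
      𝔼 l, confusionError p u x τ (c (m, k, l))
        (fun i : {m' // m' ≠ m} × Λ => c (i.1, k, i.2)) +
        2 * coveringError p u s fun l => c (m, k, l) := by
  have hideal (l : Λ) : ∑ z with thresholdDecoder p u x τ c z.1 k ≠ m,
      condPMF p u (fun ω => (x ω, s ω)) (c (m, k, l)) z ≤
        confusionError p u x τ (c (m, k, l))
          fun i : {m' // m' ≠ m} × Λ => c (i.1, k, i.2) := by
    rw [sum_filter_condPMF_fst p u x s _ fun y => thresholdDecoder p u x τ c y k ≠ m]
    refine sum_le_sum_of_subset_of_nonneg (monotone_filter_right _ fun y _ hy => ?_)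
      fun _ _ _ => condPMF_nonneg hp _ _ _ _
    contrapose! hy
    exact thresholdDecoder_eq hy.1 hy.2
  rw [← TV_outputLaw_likelihoodEncoder hp hW hlaw]
  refine (sum_filter_le_add_TV _ (fun z => 𝔼 l, condPMF p u (fun ω => (x ω, s ω))
    (c (m, k, l)) z) _).trans ?_
  rw [← expect_sum_comm]
  gcongr with l
  exact hideal l

theorem TV_expect_outputLaw_likelihoodEncoder_le [Fintype B] [Fintype κ] [Nonempty Λ]
    (hp : ∀ ω, 0 ≤ p ω) (hW : ∀ b a, W b a ∈ stdSimplex ℝ C)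
    (hlaw : IsChannelOutput p s u x W) (cw : κ × Λ → B) :
    TV (fun z => 𝔼 k, outputLaw (pushf p s)
        (likelihoodEncoder (condPMF p u s) fun l => cw (k, l)) W z)
        (pushf p fun ω => (x ω, s ω)) ≤
      𝔼 k, coveringError p u s (fun l => cw (k, l)) +
        coveringError p u (fun ω => (x ω, s ω)) cw := by
  refine (TV_triangle _ (fun z => 𝔼 k, 𝔼 l, condPMF p u (fun ω => (x ω, s ω)) (cw (k, l)) z)
    _).trans ?_
  gcongr
  · refine (TV_expect_le _ _).trans_eq ?_
    simp only [TV_outputLaw_likelihoodEncoder hp hW hlaw]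
  · rw [TV_comm]
    simp only [coveringError, ← univ_product_univ, expect_product]
    rfl

theorem isCovertCode_of_codebookDefect_le [Fintype B] [Nonempty Λ] {M K : ℕ} [NeZero M] [NeZero K]
    (hp : ∀ ω, 0 ≤ p ω) (hW : ∀ b a, W b a ∈ stdSimplex ℝ C)
    (hlaw : IsChannelOutput p s u x W)
    {τ ε : ℝ} {c : Fin M × Fin K × Λ → B} (hc : ∀ m, codebookDefect p s u x τ c m ≤ ε) :
    IsCovertCode (pushf p s) W (pushf p fun ω => (x ω, s ω))
      (fun a m k => likelihoodEncoder (condPMF p u s) (fun l => c (m, k, l)) a)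
      (thresholdDecoder p u x τ c) ε := by
  refine isCovertCode_of_forall_message (NeZero.pos M)
    (fun a m k => likelihoodEncoder_mem_stdSimplex (condPMF_nonneg hp u s) _ a) (fun m => ?_)
    fun m => ?_
  · have herr (k : Fin K) := sum_thresholdDecoder_ne_le hp hW hlaw τ c m k
    refine ((expect_le_expect fun k _ => herr k).trans ?_).trans (hc m)
    rw [expect_add_distrib, ← mul_expect, codebookDefect]
    exact le_add_of_nonneg_right (coveringError_nonneg _ _ _ _)
  · refine ((TV_expect_outputLaw_likelihoodEncoder_le hp hW hlaw fun i => c (m, i)).trans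
      ?_).trans (hc m)
    have hcov : 0 ≤ 𝔼 k, coveringError p u s fun l => c (m, k, l) :=
      expect_nonneg fun _ _ => coveringError_nonneg _ _ _ _
    have hconf : 0 ≤ 𝔼 k, 𝔼 l, confusionError p u x τ (c (m, k, l))
        fun i : {m' // m' ≠ m} × Λ => c (i.1, k, i.2) :=
      expect_nonneg fun _ _ => expect_nonneg fun _ _ => confusionError_nonneg hp _ _ _ _ _
    rw [codebookDefect]
    linarith only [hcov, hconf]

theorem sum_iid_mul_codebookDefect_le [Fintype B] [Fintype ι] [DecidableEq ι] [Fintype κ]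
    [DecidableEq κ] [DecidableEq Λ] [Nonempty κ] [Nonempty Λ] (hp : p ∈ stdSimplex ℝ Ω)
    (s : Ω → A) (u : Ω → B) (x : Ω → C) {τ₁ τ₂ τ₃ : ℝ} (hτ₁ : 0 ≤ τ₁) (hτ₂ : 0 ≤ τ₂)
    (hτ₃ : 0 < τ₃) (m : ι) :
    ∑ c : ι × κ × Λ → B, iid (pushf p u) c * codebookDefect p s u x τ₃ c m ≤
      randomCodingBound p s u x τ₁ τ₂ τ₃ (Fintype.card ι) (Fintype.card κ) (Fintype.card Λ) := by
  have hconf (k : κ) (l : Λ) : ∑ c : ι × κ × Λ → B, iid (pushf p u) c *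
      confusionError p u x τ₃ (c (m, k, l)) (fun i : {m' // m' ≠ m} × Λ => c (i.1, k, i.2)) ≤
        ∑ ω with likelihoodRatio p u x (u ω) (x ω) ≤ τ₃, p ω +
          Fintype.card ι * Fintype.card Λ / τ₃ := by
    refine (sum_iid_mul_confusionError_le hp u x hτ₃
      (e := fun i : {m' // m' ≠ m} × Λ => ((i.1 : ι), k, i.2))
      fun i h => i.1.2 (congrArg Prod.fst h)).trans ?_
    rw [Fintype.card_prod, Nat.cast_mul]
    gcongr
    exact Fintype.card_subtype_le _
  have hcov₁ (k : κ) := sum_iid_mul_coveringError_le hp u s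
    (e := fun l : Λ => (m, k, l)) (fun l l' h => by simpa using h) hτ₁
  have hcov₂ := sum_iid_mul_coveringError_le hp u (fun ω => (x ω, s ω))
    (e := fun i : κ × Λ => (m, i)) (Prod.mk_right_injective m) hτ₂
  rw [Fintype.card_prod, Nat.cast_mul] at hcov₂
  simp only [codebookDefect, mul_add, mul_left_comm _ (2 : ℝ), mul_expect, sum_add_distrib,
    ← mul_sum, ← expect_sum_comm]
  unfold randomCodingBound
  gcongr
  · exact expect_le univ_nonempty fun k _ => expect_le univ_nonempty fun l _ => hconf k l
  · rw [← mul_expect]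
    gcongr
    exact expect_le univ_nonempty fun k _ => hcov₁ k
  · exact hcov₂

theorem exists_isCovertCode [Fintype B] {M K L : ℕ} [NeZero M] [NeZero K] [NeZero L]
    (hp : p ∈ stdSimplex ℝ Ω) (hW : ∀ b a, W b a ∈ stdSimplex ℝ C)
    (hlaw : IsChannelOutput p s u x W)
    {τ₁ τ₂ τ₃ : ℝ} (hτ₁ : 0 ≤ τ₁) (hτ₂ : 0 ≤ τ₂) (hτ₃ : 0 < τ₃) :
    ∃ (f : A → Fin M → Fin K → B → ℝ) (g : C → Fin K → Fin M),
      IsCovertCode (pushf p s) W (pushf p fun ω => (x ω, s ω)) f g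
        (2 * randomCodingBound p s u x τ₁ τ₂ τ₃ (2 * M) K L) := by
  have : NeZero (2 * M) := ⟨mul_ne_zero two_ne_zero (NeZero.ne M)⟩
  have haverage : ∑ c : Fin (2 * M) × Fin K × Fin L → B, iid (pushf p u) c *
      𝔼 m, codebookDefect p s u x τ₃ c m ≤ randomCodingBound p s u x τ₁ τ₂ τ₃ (2 * M) K L := by
    simp only [mul_expect, ← expect_sum_comm]
    refine expect_le univ_nonempty fun m _ => ?_
    simpa only [Fintype.card_fin] using
      sum_iid_mul_codebookDefect_le (κ := Fin K) (Λ := Fin L) hp s u x hτ₁ hτ₂ hτ₃ m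
  obtain ⟨c, hc⟩ := exists_le_of_sum_mul_le
    (iid_mem_stdSimplex (pushf_mem_stdSimplex hp u)) haverage
  obtain ⟨e, he, hce⟩ := exists_injective_forall_le_of_expect_le (Fintype.card_fin _).symm
    (codebookDefect_nonneg hp.1 s u x τ₃ c)
    (randomCodingBound_pos hp.1 s u x τ₁ τ₂ hτ₃ (2 * M) K L) hc
  exact ⟨_, _, isCovertCode_of_codebookDefect_le hp.1 hW hlaw fun m =>
    (codebookDefect_comp_le hp.1 s u x τ₃ c he m).trans (hce m)⟩

end OneShot

/-! ### Code sizes -/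

section CodeSizes

variable {R RK I₁ I₂ I₃ δ : ℝ}

theorem one_le_two_rpow_natCast_mul {r : ℝ} (hr : 0 ≤ r) (n : ℕ) : (1 : ℝ) ≤ 2 ^ (n * r) :=
  one_le_rpow one_le_two (by positivity)

theorem two_rpow_div_ceil_le (n : ℕ) (r δ : ℝ) :
    (2 : ℝ) ^ (n * (r + δ)) / ⌈(2 : ℝ) ^ (n * (r + 2 * δ))⌉₊ ≤ 2 ^ (-(n * δ)) := by
  calc (2 : ℝ) ^ (n * (r + δ)) / ⌈(2 : ℝ) ^ (n * (r + 2 * δ))⌉₊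
      ≤ 2 ^ (n * (r + δ)) / 2 ^ (n * (r + 2 * δ)) := by gcongr; exact Nat.le_ceil _
    _ = 2 ^ (-(n * δ)) := by rw [← rpow_sub two_pos]; congr 1; ring

theorem two_rpow_div_floor_mul_ceil_le (hI₂ : 0 ≤ I₂) (hRK : I₂ ≤ RK) (n : ℕ) (I₁ δ : ℝ) :
    (2 : ℝ) ^ (n * (I₁ + I₂ + δ)) / (⌊(2 : ℝ) ^ (n * RK)⌋₊ * ⌈(2 : ℝ) ^ (n * (I₁ + 2 * δ))⌉₊) ≤
      2 * 2 ^ (-(n * δ)) := by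
  have hfloor : (2 : ℝ) ^ (n * I₂) / 2 ≤ ⌊(2 : ℝ) ^ (n * RK)⌋₊ :=
    (Nat.div_two_lt_floor (one_le_two_rpow_natCast_mul hI₂ n)).le.trans
      (by gcongr; exact one_le_two)
  calc (2 : ℝ) ^ (n * (I₁ + I₂ + δ)) /
        (⌊(2 : ℝ) ^ (n * RK)⌋₊ * ⌈(2 : ℝ) ^ (n * (I₁ + 2 * δ))⌉₊)
      ≤ 2 ^ (n * (I₁ + I₂ + δ)) / (2 ^ (n * I₂) / 2 * ⌈(2 : ℝ) ^ (n * (I₁ + 2 * δ))⌉₊) := by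
        have : 0 < ⌈(2 : ℝ) ^ (n * (I₁ + 2 * δ))⌉₊ := Nat.ceil_pos.2 (by positivity)
        gcongr
    _ = 2 * (2 ^ (n * (I₁ + δ)) / ⌈(2 : ℝ) ^ (n * (I₁ + 2 * δ))⌉₊) := by
        rw [show (n : ℝ) * (I₁ + I₂ + δ) = n * I₂ + n * (I₁ + δ) by ring, rpow_add two_pos]
        field_simp
    _ ≤ 2 * 2 ^ (-(n * δ)) := by gcongr; exact two_rpow_div_ceil_le n I₁ δ

theorem ceil_mul_ceil_div_two_rpow_le (hR : 0 ≤ R) (hI₁ : 0 ≤ I₁) (hδ : 0 ≤ δ)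
    (hI₃ : R + I₁ + 4 * δ = I₃) (n : ℕ) :
    (2 * ⌈(2 : ℝ) ^ (n * R)⌉₊ : ℕ) * ⌈(2 : ℝ) ^ (n * (I₁ + 2 * δ))⌉₊ / (2 : ℝ) ^ (n * (I₃ - δ)) ≤
      8 * 2 ^ (-(n * δ)) := by
  have hceil {r : ℝ} (hr : 0 ≤ r) : (⌈(2 : ℝ) ^ (n * r)⌉₊ : ℝ) ≤ 2 * 2 ^ (n * r) :=
    Nat.ceil_le_two_mul (by linarith [one_le_two_rpow_natCast_mul hr n])
  have hM := hceil hR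
  have hL := hceil (r := I₁ + 2 * δ) (by positivity)
  rw [div_le_iff₀ (by positivity)]
  push_cast
  calc (2 * ⌈(2 : ℝ) ^ (n * R)⌉₊ : ℝ) * ⌈(2 : ℝ) ^ (n * (I₁ + 2 * δ))⌉₊
      ≤ 2 * (2 * 2 ^ (n * R)) * (2 * 2 ^ (n * (I₁ + 2 * δ))) := by gcongr
    _ = 8 * (2 ^ (n * R) * 2 ^ (n * (I₁ + 2 * δ))) := by ring
    _ = 8 * 2 ^ (-(n * δ)) * 2 ^ (n * (I₃ - δ)) := by
        rw [mul_assoc, ← rpow_add two_pos, ← rpow_add two_pos, ← hI₃]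
        congr 2
        ring

theorem tendsto_two_rpow_neg_natCast_mul (hδ : 0 < δ) :
    Tendsto (fun n : ℕ => (2 : ℝ) ^ (-(n * δ))) atTop (nhds 0) :=
  (tendsto_rpow_atBot_of_base_gt_one 2 one_lt_two).comp
    (tendsto_neg_atTop_atBot.comp (tendsto_natCast_atTop_atTop.atTop_mul_const hδ))

end CodeSizes

/-! ### Asymptotic achievability -/

section Asymptotics

variable {Ω A B C : Type*} [Fintype Ω] {p : Ω → ℝ} {s : Ω → A} {u : Ω → B} {x : Ω → C}
  {W : B → A → C → ℝ}

theorem isChannelOutput_iid (hlaw : IsChannelOutput p s u x W) (J : Type*) [Fintype J]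
    [DecidableEq J] :
    IsChannelOutput (iid p) (fun w : J → Ω => s ∘ w) (fun w => u ∘ w) (fun w => x ∘ w)
      fun b a y => ∏ j, W (b j) (a j) (y j) := by
  intro b y a
  have htriple : pushf (iid p) (fun w : J → Ω => (u ∘ w, x ∘ w, s ∘ w)) (b, y, a) =
      ∏ j, pushf p (fun ω => (u ω, x ω, s ω)) (b j, y j, a j) := by
    simpa only [pushf, iid, sum_filter, funext_iff, Function.comp_apply, Prod.mk.injEq,
      forall_and] using sum_iid_filter_forall p fun j ω => (u ω, x ω, s ω) = (b j, y j, a j)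
  rw [htriple, pushf_iid_pair, ← prod_mul_distrib]
  exact prod_congr rfl fun j _ => hlaw (b j) (y j) (a j)

theorem likelihoodRatio_injective_comp {D : Type*} (p : Ω → ℝ) (f : Ω → B) (g : Ω → C) {e : C → D}
    (he : Function.Injective e) (b : B) (y : C) :
    likelihoodRatio p f (fun ω => e (g ω)) b (e y) = likelihoodRatio p f g b y := by
  simp only [likelihoodRatio, pushf, Prod.mk.injEq, he.eq_iff]

variable [Fintype A] [Fintype B] [Fintype C]

theorem tendsto_sum_filter_lt_likelihoodRatio_iid_prod (hp : p ∈ stdSimplex ℝ Ω) {r : ℝ}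
    (hr : mi p u s + cmi p u x s < r) :
    Tendsto (fun n : ℕ => ∑ w : Fin n → Ω with 2 ^ (n * r) < likelihoodRatio (iid p)
      (fun w => u ∘ w) (fun w => (x ∘ w, s ∘ w)) (u ∘ w) (x ∘ w, s ∘ w), iid p w)
      atTop (nhds 0) := by
  rw [mi_add_cmi] at hr
  refine (tendsto_sum_filter_lt_likelihoodRatio_iid hp hr).congr fun n => ?_
  have hunzip : Function.Injective fun z : Fin n → C × A => (Prod.fst ∘ z, Prod.snd ∘ z) :=
    fun z z' h => funext fun t => Prod.ext (congrFun (congrArg Prod.fst h) t)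
      (congrFun (congrArg Prod.snd h) t)
  simp only [← likelihoodRatio_injective_comp (iid p) _ _ hunzip]
  rfl

theorem tendsto_randomCodingBound (hp : p ∈ stdSimplex ℝ Ω) {R RK δ : ℝ} (hR : 0 ≤ R)
    (hRK : cmi p u x s < RK) (hδ : 0 < δ) (hrate : R + mi p u s + 4 * δ = mi p u x) :
    Tendsto (fun n : ℕ => randomCodingBound (iid p) (fun w : Fin n → Ω => s ∘ w) (fun w => u ∘ w)
      (fun w => x ∘ w) (2 ^ (n * (mi p u s + δ))) (2 ^ (n * (mi p u s + cmi p u x s + δ)))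
      (2 ^ (n * (mi p u x - δ))) (2 * ⌈(2 : ℝ) ^ (n * R)⌉₊) ⌊(2 : ℝ) ^ (n * RK)⌋₊
      ⌈(2 : ℝ) ^ (n * (mi p u s + 2 * δ))⌉₊) atTop (nhds 0) := by
  have hy := tendsto_two_rpow_neg_natCast_mul hδ
  have hconf := tendsto_sum_filter_likelihoodRatio_iid_le hp (sub_lt_self (mi p u x) hδ)
  have hcov₁ := tendsto_sum_filter_lt_likelihoodRatio_iid hp (lt_add_of_pos_right (mi p u s) hδ)
  have hcov₂ := tendsto_sum_filter_lt_likelihoodRatio_iid_prod hp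
    (lt_add_of_pos_right (mi p u s + cmi p u x s) hδ)
  have hlimit := ((hconf.add (hy.const_mul 8)).add
    ((hcov₁.add (hy.sqrt.div_const 2)).const_mul 2)).add
      (hcov₂.add ((hy.const_mul 2).sqrt.div_const 2))
  simp only [mul_zero, sqrt_zero, zero_div, add_zero] at hlimit
  refine squeeze_zero (fun n => ?_) (fun n => ?_) hlimit
  · have : NeZero ⌈(2 : ℝ) ^ (n * R)⌉₊ := ⟨(Nat.ceil_pos.2 (by positivity)).ne'⟩
    have : NeZero ⌈(2 : ℝ) ^ (n * (mi p u s + 2 * δ))⌉₊ := ⟨(Nat.ceil_pos.2 (by positivity)).ne'⟩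
    exact (randomCodingBound_pos (iid_mem_stdSimplex hp).1 _ _ _ _ _ (by positivity) _ _ _).le
  · unfold randomCodingBound
    gcongr
    · exact ceil_mul_ceil_div_two_rpow_le hR (mi_nonneg hp u s) hδ.le hrate n
    · exact two_rpow_div_ceil_le n _ δ
    · exact two_rpow_div_floor_mul_ceil_le (cmi_nonneg hp u x s) hRK.le n _ δ

theorem exists_isCovertCode_zero (hp : p ∈ stdSimplex ℝ Ω) (hlaw : IsChannelOutput p s u x W) :
    ∃ (f : A → Fin 1 → Fin 1 → B → ℝ) (g : C → Fin 1 → Fin 1),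
      IsCovertCode (pushf p s) W (pushf p fun ω => (x ω, s ω)) f g 0 := by
  obtain ⟨ω, -⟩ := exists_ne_zero_of_sum_ne_zero (hp.2.trans_ne one_ne_zero)
  have : Nonempty B := ⟨u ω⟩
  have hjoint (a : A) (b : B) : 0 ≤ pushf p (fun ω => (u ω, s ω)) (b, a) := pushf_nonneg hp.1 _ _
  have houtput (z : C × A) : outputLaw (pushf p s)
      (fun a => normalizeMass fun b => pushf p (fun ω => (u ω, s ω)) (b, a)) W z =
        pushf p (fun ω => (x ω, s ω)) z := by
    rw [outputLaw, ← sum_pushf_fst p u s, mul_sum]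
    simp only [← mul_assoc, sum_mul_normalizeMass (hjoint z.2), ← hlaw _ z.1 z.2]
    exact sum_pushf_fst p u (fun ω => (x ω, s ω)) z
  refine ⟨fun a _ _ => normalizeMass fun b => pushf p (fun ω => (u ω, s ω)) (b, a), fun _ _ => 0,
    isCovertCode_of_forall_message one_pos
      (fun a _ _ => normalizeMass_mem_stdSimplex (hjoint a)) (fun m => ?_) fun _ => ?_⟩
  · simp [Subsingleton.elim m 0]
  · simp [houtput, TV]

theorem eventually_exists_isCovertCode_of_nonneg (hp : p ∈ stdSimplex ℝ Ω)
    (hW : ∀ b a, W b a ∈ stdSimplex ℝ C) (hlaw : IsChannelOutput p s u x W) {R RK ε : ℝ}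
    (hR0 : 0 ≤ R) (hR : R < mi p u x - mi p u s) (hRK : cmi p u x s < RK) (hε : 0 < ε) :
    ∀ᶠ n : ℕ in atTop, ∃ (f : (Fin n → A) → Fin ⌈(2 : ℝ) ^ (n * R)⌉₊ →
        Fin ⌊(2 : ℝ) ^ (n * RK)⌋₊ → (Fin n → B) → ℝ)
      (g : (Fin n → C) → Fin ⌊(2 : ℝ) ^ (n * RK)⌋₊ → Fin ⌈(2 : ℝ) ^ (n * R)⌉₊),
      IsCovertCode (pushf (iid p) fun w => s ∘ w) (fun b a y => ∏ t, W (b t) (a t) (y t))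
        (pushf (iid p) fun w => (x ∘ w, s ∘ w)) f g ε := by
  obtain ⟨δ, hδ, hrate⟩ : ∃ δ > 0, R + mi p u s + 4 * δ = mi p u x :=
    ⟨(mi p u x - mi p u s - R) / 4, by linarith, by ring⟩
  have hRK0 : 0 ≤ RK := (cmi_nonneg hp u x s).trans hRK.le
  filter_upwards [(tendsto_randomCodingBound hp hR0 hRK hδ hrate).eventually_lt_const
    (half_pos hε)] with n hn
  have := NeZero.of_pos (Nat.ceil_pos.2 (show (0 : ℝ) < 2 ^ (n * R) by positivity))
  have := NeZero.of_pos (Nat.floor_pos.2 (one_le_two_rpow_natCast_mul hRK0 n))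
  have := NeZero.of_pos (Nat.ceil_pos.2
    (show (0 : ℝ) < 2 ^ (n * (mi p u s + 2 * δ)) by positivity))
  obtain ⟨f, g, h⟩ := exists_isCovertCode (M := ⌈(2 : ℝ) ^ (n * R)⌉₊)
    (K := ⌊(2 : ℝ) ^ (n * RK)⌋₊) (L := ⌈(2 : ℝ) ^ (n * (mi p u s + 2 * δ))⌉₊)
    (τ₁ := 2 ^ (n * (mi p u s + δ))) (τ₂ := 2 ^ (n * (mi p u s + cmi p u x s + δ)))
    (τ₃ := 2 ^ (n * (mi p u x - δ))) (iid_mem_stdSimplex hp)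
    (fun (b : Fin n → B) (a : Fin n → A) => prod_mem_stdSimplex fun t => hW (b t) (a t))
    (isChannelOutput_iid hlaw (Fin n))
    (by positivity) (by positivity) (by positivity)
  exact ⟨f, g, h.mono (by linarith)⟩

theorem eventually_exists_isCovertCode (hp : p ∈ stdSimplex ℝ Ω)
    (hW : ∀ b a, W b a ∈ stdSimplex ℝ C) (hlaw : IsChannelOutput p s u x W) {R RK ε : ℝ}
    (hR : R < mi p u x - mi p u s) (hRK : cmi p u x s < RK) (hε : 0 < ε) :
    ∀ᶠ n : ℕ in atTop, ∃ M K : ℕ, 0 < M ∧ 0 < K ∧ (2 : ℝ) ^ (n * R) ≤ M ∧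
      (K : ℝ) ≤ 2 ^ (n * RK) ∧
      ∃ (f : (Fin n → A) → Fin M → Fin K → (Fin n → B) → ℝ) (g : (Fin n → C) → Fin K → Fin M),
        IsCovertCode (iid (pushf p s)) (fun b a y => ∏ t, W (b t) (a t) (y t))
          (fun z : (Fin n → C) × (Fin n → A) => ∏ t, pushf p (fun ω => (x ω, s ω)) (z.1 t, z.2 t))
          f g ε := by
  have hRK0 : 0 ≤ RK := (cmi_nonneg hp u x s).trans hRK.le
  simp only [← pushf_iid_pair, Prod.mk.eta, ← pushf_iid]
  rcases lt_or_ge R 0 with hR0 | hR0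
  · refine Eventually.of_forall fun n => ⟨1, 1, one_pos, one_pos, ?_, ?_, ?_⟩
    · simpa using rpow_le_one_of_one_le_of_nonpos one_le_two
        (mul_nonpos_of_nonneg_of_nonpos n.cast_nonneg hR0.le)
    · simpa using one_le_two_rpow_natCast_mul hRK0 n
    · obtain ⟨f, g, h⟩ := exists_isCovertCode_zero (iid_mem_stdSimplex hp)
        (isChannelOutput_iid hlaw (Fin n))
      exact ⟨f, g, h.mono hε.le⟩
  · filter_upwards [eventually_exists_isCovertCode_of_nonneg hp hW hlaw hR0 hR hRK hε] with n hn
    exact ⟨_, _, Nat.ceil_pos.2 (by positivity),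
      Nat.floor_pos.2 (one_le_two_rpow_natCast_mul hRK0 n), Nat.le_ceil _,
      Nat.floor_le (by positivity), hn⟩

end Asymptotics

/-! ### Single-letter law -/

section JointLaw

variable {S U X : Type*} [Fintype S] [Fintype U] [Fintype X] {PS : S → ℝ} {PU : S → U → ℝ}
  {W : U → S → X → ℝ}

/-- The joint law `P_S · P_{U|S} · W_{X|U,S}` of state, auxiliary input and output. -/
def jointLaw (PS : S → ℝ) (PU : S → U → ℝ) (W : U → S → X → ℝ) (z : S × U × X) : ℝ :=
  PS z.1 * PU z.1 z.2.1 * W z.2.1 z.1 z.2.2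

theorem jointLaw_mem_stdSimplex (hPS : PS ∈ stdSimplex ℝ S) (hPU : ∀ s, PU s ∈ stdSimplex ℝ U)
    (hW : ∀ u s, W u s ∈ stdSimplex ℝ X) : jointLaw PS PU W ∈ stdSimplex ℝ (S × U × X) := by
  refine ⟨fun z => mul_nonneg (mul_nonneg (hPS.1 _) ((hPU _).1 _)) ((hW _ _).1 _), ?_⟩
  simp only [jointLaw, Fintype.sum_prod_type, ← mul_sum, (hW _ _).2, (hPU _).2, mul_one, hPS.2]

theorem pushf_jointLaw_input_output_state (u : U) (x : X) (s : S) :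
    pushf (jointLaw PS PU W) (fun z => (z.2.1, z.2.2, z.1)) (u, x, s) =
      PS s * PU s u * W u s x := by
  simp [pushf, jointLaw, Fintype.sum_prod_type, ite_and]

theorem pushf_jointLaw_input_state (hW : ∀ u s, W u s ∈ stdSimplex ℝ X) (u : U) (s : S) :
    pushf (jointLaw PS PU W) (fun z => (z.2.1, z.1)) (u, s) = PS s * PU s u := by
  rw [← sum_pushf_mid (jointLaw PS PU W) (fun z => z.2.1) (fun z => z.2.2) fun z => z.1]
  simp only [pushf_jointLaw_input_output_state, ← mul_sum, (hW _ _).2, mul_one]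

theorem isChannelOutput_jointLaw (hW : ∀ u s, W u s ∈ stdSimplex ℝ X) :
    IsChannelOutput (jointLaw PS PU W) (fun z => z.1) (fun z => z.2.1) (fun z => z.2.2) W := by
  intro u x s
  rw [pushf_jointLaw_input_output_state, pushf_jointLaw_input_state hW]

theorem pushf_jointLaw_state (hPU : ∀ s, PU s ∈ stdSimplex ℝ U)
    (hW : ∀ u s, W u s ∈ stdSimplex ℝ X) : pushf (jointLaw PS PU W) (fun z => z.1) = PS := by
  funext s
  rw [← sum_pushf_fst (jointLaw PS PU W) (fun z => z.2.1)]
  simp only [pushf_jointLaw_input_state hW, ← mul_sum, (hPU s).2, mul_one]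

theorem pushf_jointLaw_output_state (hPS : ∀ s, 0 ≤ PS s) {PXgS : S → X → ℝ}
    (hmarg : ∀ s, 0 < PS s → ∀ x, ∑ u, PU s u * W u s x = PXgS s x) (x : X) (s : S) :
    pushf (jointLaw PS PU W) (fun z => (z.2.2, z.1)) (x, s) = PXgS s x * PS s := by
  rw [← sum_pushf_fst (jointLaw PS PU W) (fun z => z.2.1)]
  simp only [pushf_jointLaw_input_output_state, mul_assoc, ← mul_sum]
  rcases (hPS s).eq_or_lt with hs | hs
  · simp [← hs]
  · rw [hmarg s hs, mul_comm]

end JointLaw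

/-- **Achievability part of Theorem 1** (covert multi-bit watermarking capacity with
non-causal state).  For any auxiliary conditional pmfs `PU = P_{U|S}` and `W = W_{X|U,S}`
satisfying the marginal constraint, any message rate `R < I(U;X) - I(U;S)` and any key
rate `RK > I(U;X|S)` are achievable: for every `ε > 0` there is a blocklength `n`, a
message set of size at least `2^{nR}`, a key set of size at most `2^{nRK}`, a stochastic
encoder and a decoder such that the average error probability is at most `ε` and, for
every message `m`, the total variation between the induced joint law of `(X^n, S^n)`
given `M = m` (averaged over the key) and the base law `(P_{X|S} P_S)^{⊗n}` is at
most `ε`. -/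
theorem covert_watermarking_achievability
    {S U X : Type*} [Fintype S] [Fintype U] [Fintype X]
    (PS : S → ℝ) (PXgS : S → X → ℝ) (PU : S → U → ℝ) (W : U → S → X → ℝ)
    (hPS0 : ∀ s, 0 ≤ PS s) (hPS1 : ∑ s, PS s = 1)
    (hPX0 : ∀ s x, 0 ≤ PXgS s x) (hPX1 : ∀ s, ∑ x, PXgS s x = 1)
    (hPU0 : ∀ s u, 0 ≤ PU s u) (hPU1 : ∀ s, ∑ u, PU s u = 1)
    (hW0 : ∀ u s x, 0 ≤ W u s x) (hW1 : ∀ u s, ∑ x, W u s x = 1)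
    (hmarg : ∀ s, 0 < PS s → ∀ x, ∑ u, PU s u * W u s x = PXgS s x)
    (R RK ε : ℝ) (hε : 0 < ε)
    (hR : R < mi (fun z : S × U × X => PS z.1 * PU z.1 z.2.1 * W z.2.1 z.1 z.2.2)
            (fun z => z.2.1) (fun z => z.2.2)
          - mi (fun z : S × U × X => PS z.1 * PU z.1 z.2.1 * W z.2.1 z.1 z.2.2)
            (fun z => z.2.1) (fun z => z.1))
    (hRK : RK > cmi (fun z : S × U × X => PS z.1 * PU z.1 z.2.1 * W z.2.1 z.1 z.2.2)
            (fun z => z.2.1) (fun z => z.2.2) (fun z => z.1)) :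
    ∃ (n Mn Kn : ℕ), 0 < n ∧ 0 < Mn ∧ 0 < Kn ∧
      (2 : ℝ) ^ ((n : ℝ) * R) ≤ (Mn : ℝ) ∧ (Kn : ℝ) ≤ (2 : ℝ) ^ ((n : ℝ) * RK) ∧
      ∃ (f : (Fin n → S) → Fin Mn → Fin Kn → (Fin n → U) → ℝ)
        (g : (Fin n → X) → Fin Kn → Fin Mn),
        (∀ sn m k un, 0 ≤ f sn m k un) ∧ (∀ sn m k, ∑ un, f sn m k un = 1) ∧
        -- the joint law of (Sⁿ, M, K, Uⁿ, Xⁿ): Sⁿ ~ P_S^{⊗n}, M and K uniform and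
        -- independent, Uⁿ ~ f(Sⁿ,M,K), and Xⁿ generated memorylessly from W
        (let joint : (Fin n → S) × Fin Mn × Fin Kn × (Fin n → U) × (Fin n → X) → ℝ :=
          fun z => (∏ t, PS (z.1 t)) * (1 / (Mn : ℝ)) * (1 / (Kn : ℝ))
            * f z.1 z.2.1 z.2.2.1 z.2.2.2.1
            * ∏ t, W (z.2.2.2.1 t) (z.1 t) (z.2.2.2.2 t)
        -- (i) the average probability of decoding error is at most ε
        (∑ z : (Fin n → S) × Fin Mn × Fin Kn × (Fin n → U) × (Fin n → X),
            if g z.2.2.2.2 z.2.2.1 ≠ z.2.1 then joint z else 0) ≤ ε ∧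
        -- (ii) covertness: for every message m, the induced law of (Xⁿ,Sⁿ) given M = m
        -- is ε-close in total variation to the base product law
        (∀ m : Fin Mn,
          TV (fun xs : (Fin n → X) × (Fin n → S) =>
                (Mn : ℝ) * ∑ k, ∑ un, joint (xs.2, m, k, un, xs.1))
             (fun xs : (Fin n → X) × (Fin n → S) =>
                ∏ t, PXgS (xs.2 t) (xs.1 t) * PS (xs.2 t)) ≤ ε)) := by
  have hW (u : U) (s : S) : W u s ∈ stdSimplex ℝ X := ⟨hW0 u s, hW1 u s⟩
  have hPU (s : S) : PU s ∈ stdSimplex ℝ U := ⟨hPU0 s, hPU1 s⟩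
  have hcodes := eventually_exists_isCovertCode (jointLaw_mem_stdSimplex ⟨hPS0, hPS1⟩ hPU hW) hW
    (isChannelOutput_jointLaw hW) hR hRK hε
  simp only [pushf_jointLaw_state hPU hW, pushf_jointLaw_output_state hPS0 hmarg] at hcodes
  obtain ⟨n, ⟨M, K, hM, hK, hMR, hKR, f, g, hcode⟩, hn⟩ :=
    (hcodes.and (eventually_gt_atTop 0)).exists
  exact ⟨n, M, K, hn, hM, hK, hMR, hKR, f, g, fun s m k => (hcode.encoder_mem s m k).1,
    fun s m k => (hcode.encoder_mem s m k).2, hcode.error_le, hcode.TV_le⟩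
end
end

section
/- Achievability computation in Corollary 2 (binary-support pair model). Fix an integer V ≥ 2 and work in the pair model. Let (A, B) be any partition of {1,…,V} into two nonempty sets, and define U = 1{X ∈ B} (a deterministic binary function of X). Then under the joint distribution of (S, U, X): H(U|X) = 0, H(U|S) = |A|·|B| / C(V,2), and consequently I(U;X) − I(U;S) = |A|·|B| / C(V,2) and I(U;X|S) = |A|·|B| / C(V,2). In particular, choosing |A| = ⌊V/2⌋ and |B| = ⌈V/2⌉ gives I(U;X) − I(U;S) = I(U;X|S) = ⌊V²/4⌋ / C(V,2). -/
open Finset Filter Real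

noncomputable section

open scoped Classical

/-!
Since `U` is a function of `X`, we have `H(U|X) = 0`, and the chain rule turns both
`I(U;X) − I(U;S)` and `I(U;X|S)` into `H(U|S)`. Given the pair `S`, the bit `U` is fair if `S` has
one element in `A` and one in `B`, and constant otherwise, so `H(U|S)` is the probability that `S`
is cut by the partition. For uniform `S` this is `|A||B| / C(V,2)`.
-/

section Pushforward

variable {α β γ : Type*} [Fintype α]

theorem pushf_true_add_pushf_false (p : α → ℝ) (f : α → Bool) (g : α → β) (b : β) :
    pushf p (fun a => (f a, g a)) (true, b) + pushf p (fun a => (f a, g a)) (false, b)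
      = pushf p g b := by
  simp only [pushf, ← Finset.sum_add_distrib, Prod.mk.injEq]
  refine Finset.sum_congr rfl fun a _ => ?_
  cases f a <;> simp

variable [Fintype β]

theorem pushf_fst (p : α × β → ℝ) (a : α) : pushf p Prod.fst a = ∑ b, p (a, b) := by
  simp [pushf, Fintype.sum_prod_type_right]

theorem pushf_comp_snd_fst (p : α × β → ℝ) (φ : β → γ) (c : γ) (a : α) :
    pushf p (fun z => (φ z.2, z.1)) (c, a) = ∑ b with φ b = c, p (a, b) := by
  simp [pushf, Fintype.sum_prod_type_right, Finset.sum_filter, ite_and]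

end Pushforward

section Entropy

variable {α β γ δ : Type*} [Fintype α] [Fintype β] [Fintype γ] [Fintype δ]

theorem entRV_comp_of_injective (p : α → ℝ) (f : α → β) {φ : β → γ} (hφ : φ.Injective) :
    entRV p (fun a => φ (f a)) = entRV p f := by
  have pushf_apply (b : β) : pushf p (fun a => φ (f a)) (φ b) = pushf p f b := by
    simp only [pushf, hφ.eq_iff]
  have pushf_off_range (c : γ) (hc : c ∉ Set.range φ) : pushf p (fun a => φ (f a)) c = 0 :=
    Finset.sum_eq_zero fun a _ => if_neg fun h => hc ⟨f a, h⟩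
  refine congrArg Neg.neg (Fintype.sum_of_injective φ hφ _ _ ?_ ?_).symm
  · intro c hc
    rw [pushf_off_range c hc, zero_mul]
  · intro b
    rw [pushf_apply]

theorem entRV_prodMk_comp_self (p : α → ℝ) (f : α → β) (φ : β → γ) :
    entRV p (fun a => (φ (f a), f a)) = entRV p f :=
  entRV_comp_of_injective p f (φ := fun b => (φ b, b)) fun _ _ h => (Prod.ext_iff.mp h).2

theorem condEnt_comp_self (p : α → ℝ) (f : α → β) (φ : β → γ) :
    condEnt p (fun a => φ (f a)) f = 0 := by
  rw [condEnt, entRV_prodMk_comp_self, sub_self]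

theorem mi_comp_self_sub_mi (p : α → ℝ) (f : α → β) (φ : β → γ) (g : α → δ) :
    mi p (fun a => φ (f a)) f - mi p (fun a => φ (f a)) g = condEnt p (fun a => φ (f a)) g := by
  rw [mi, mi, condEnt, entRV_prodMk_comp_self]
  ring

theorem cmi_comp_self (p : α → ℝ) (f : α → β) (φ : β → γ) (g : α → δ) :
    cmi p (fun a => φ (f a)) f g = condEnt p (fun a => φ (f a)) g := by
  rw [cmi, condEnt, entRV_prodMk_comp_self p (fun a => (f a, g a)) fun y => φ y.1]
  ring

theorem mul_logb_mul (b x y : ℝ) :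
    x * y * logb b (x * y) = y * (x * logb b x) + x * (y * logb b y) := by
  rcases eq_or_ne x 0 with rfl | hx
  · simp
  rcases eq_or_ne y 0 with rfl | hy
  · simp
  rw [logb_mul hx hy]
  ring

theorem mul_h2 (w t : ℝ) :
    w * h2 t = w * logb 2 w - w * t * logb 2 (w * t) - w * (1 - t) * logb 2 (w * (1 - t)) := by
  rw [h2, mul_logb_mul, mul_logb_mul]
  ring

-- The product form of `ht`, unlike a quotient, leaves `t b` free where `g = b` has mass `0`.
theorem condEnt_eq_sum_mul_h2 (p : α → ℝ) (f : α → Bool) (g : α → β) (t : β → ℝ)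
    (ht : ∀ b, pushf p (fun a => (f a, g a)) (true, b) = pushf p g b * t b) :
    condEnt p f g = ∑ b, pushf p g b * h2 (t b) := by
  have hf (b : β) : pushf p (fun a => (f a, g a)) (false, b) = pushf p g b * (1 - t b) := by
    linear_combination pushf_true_add_pushf_false p f g b - ht b
  simp only [condEnt, entRV, ent, Fintype.sum_prod_type, Fintype.sum_bool, ht, hf, mul_h2,
    Finset.sum_sub_distrib]
  ring

theorem h2_zero : h2 0 = 0 := by simp [h2]

theorem h2_one : h2 1 = 0 := by simp [h2]

theorem h2_two_inv : h2 2⁻¹ = 1 := by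
  have hlog : logb 2 (2⁻¹ : ℝ) = -1 := by simp
  rw [h2, show (1 : ℝ) - 2⁻¹ = 2⁻¹ by norm_num, hlog]
  norm_num

end Entropy

section PairModel

/-- The two-element subsets of `α`, i.e. the values of the state `S`. -/
abbrev TwoSubset (α : Type*) := {s : Finset α // s.card = 2}

theorem nonempty_twoSubset {α : Type*} [Fintype α] (h : 2 ≤ Fintype.card α) :
    Nonempty (TwoSubset α) := by
  obtain ⟨s, -, hs⟩ := Finset.exists_subset_card_eq (s := (univ : Finset α)) h
  exact ⟨⟨s, hs⟩⟩

theorem toReal_uniformOfFintype_twoSubset {α : Type*} [Fintype α] [Nonempty (TwoSubset α)]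
    (s : TwoSubset α) :
    (PMF.uniformOfFintype (TwoSubset α) s).toReal = 1 / (Fintype.card α).choose 2 := by
  simp [PMF.uniformOfFintype_apply, Fintype.card_finset_len]

variable {α : Type*} [DecidableEq α]

/-- The joint mass function of `(S, X)` when `S` has mass function `w` on the two-element subsets
and `X` is uniform on `S`. -/
def pairMass (w : TwoSubset α → ℝ) : TwoSubset α × α → ℝ :=
  fun z => if z.2 ∈ z.1.val then w z.1 / 2 else 0

theorem sum_pairMass (w : TwoSubset α → ℝ) (s : TwoSubset α) (B : Finset α) :
    ∑ x ∈ B, pairMass w (s, x) = w s * (#(s.val ∩ B) / 2) := by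
  simp only [pairMass]
  rw [Finset.sum_ite_mem, Finset.sum_const, nsmul_eq_mul, Finset.inter_comm]
  ring

theorem h2_card_inter_div_two (s : TwoSubset α) (B : Finset α) :
    h2 (#(s.val ∩ B) / 2) = if #(s.val ∩ B) = 1 then 1 else 0 := by
  have hle : #(s.val ∩ B) ≤ 2 := (Finset.card_le_card Finset.inter_subset_left).trans s.property.le
  generalize #(s.val ∩ B) = n at hle ⊢
  interval_cases n
  · simp [h2_zero]
  · simp [h2_two_inv]
  · simp [h2_one]

theorem exists_eq_pair_of_card_inter_eq_one {s : TwoSubset α} {B : Finset α}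
    (hinter : #(s.val ∩ B) = 1) : ∃ a ∉ B, ∃ b ∈ B, s.val = {a, b} := by
  have hsdiff : #(s.val \ B) = 1 := by
    have hsum : #(s.val ∩ B) + #(s.val \ B) = 2 :=
      (Finset.card_inter_add_card_sdiff s.val B).trans s.property
    omega
  obtain ⟨b, hb⟩ := Finset.card_eq_one.mp hinter
  obtain ⟨a, ha⟩ := Finset.card_eq_one.mp hsdiff
  refine ⟨a, (Finset.mem_sdiff.mp (ha ▸ Finset.mem_singleton_self a)).2,
    b, (Finset.mem_inter.mp (hb ▸ Finset.mem_singleton_self b)).2, ?_⟩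
  rw [← Finset.sdiff_union_inter s.val B, ha, hb, Finset.singleton_union]

variable [Fintype α]

/-- The weight of the cut `(B, Bᶜ)` of the complete graph on `α` whose edge `s` has weight `w s`;
an edge crosses the cut iff it has exactly one element in `B`. -/
def cutWeight (w : TwoSubset α → ℝ) (B : Finset α) : ℝ :=
  ∑ s : TwoSubset α with #(s.val ∩ B) = 1, w s

theorem pushf_pairMass_fst (w : TwoSubset α → ℝ) (s : TwoSubset α) :
    pushf (pairMass w) Prod.fst s = w s := by
  simp [pushf_fst, sum_pairMass, s.property]

theorem pushf_pairMass_mem_fst (w : TwoSubset α → ℝ) (B : Finset α) (s : TwoSubset α) :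
    pushf (pairMass w) (fun z => (decide (z.2 ∈ B), z.1)) (true, s)
      = w s * (#(s.val ∩ B) / 2) := by
  rw [pushf_comp_snd_fst _ fun x => decide (x ∈ B), ← sum_pairMass]
  simp

theorem condEnt_pairMass (w : TwoSubset α → ℝ) (B : Finset α) :
    condEnt (pairMass w) (fun z => decide (z.2 ∈ B)) Prod.fst = cutWeight w B := by
  rw [condEnt_eq_sum_mul_h2 _ _ _ (fun s => #(s.val ∩ B) / 2) fun s => by
    rw [pushf_pairMass_mem_fst, pushf_pairMass_fst]]
  simp only [pushf_pairMass_fst, h2_card_inter_div_two, mul_ite, mul_one, mul_zero, cutWeight,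
    Finset.sum_filter]

theorem card_twoSubset_inter_eq_one (B : Finset α) :
    #{s : TwoSubset α | #(s.val ∩ B) = 1} = #Bᶜ * #B := by
  have hne {a b : α} (ha : a ∈ Bᶜ) (hb : b ∈ B) : a ≠ b := by
    rintro rfl
    exact Finset.mem_compl.mp ha hb
  rw [← Finset.card_product]
  symm
  refine Finset.card_bij (fun z hz => ⟨{z.1, z.2}, Finset.card_pair
    (hne (Finset.mem_product.mp hz).1 (Finset.mem_product.mp hz).2)⟩) ?maps ?inj ?surj
  case maps =>
    rintro ⟨a, b⟩ hab
    obtain ⟨ha, hb⟩ := Finset.mem_product.mp hab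
    simp [Finset.insert_inter_of_notMem (Finset.mem_compl.mp ha), Finset.singleton_inter_of_mem hb]
  case inj =>
    rintro ⟨a, b⟩ hab ⟨c, d⟩ hcd h
    obtain ⟨ha, hb⟩ := Finset.mem_product.mp hab
    obtain ⟨hc, hd⟩ := Finset.mem_product.mp hcd
    have hpair : ({a, b} : Finset α) = {c, d} := congrArg Subtype.val h
    have ha' : a = c ∨ a = d := by simpa [hpair] using Finset.mem_insert_self a {b}
    have hb' : b = c ∨ b = d := by
      simpa [hpair] using Finset.mem_insert_of_mem (b := a) (Finset.mem_singleton_self b)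
    exact Prod.ext (ha'.resolve_right (hne ha hd)) (hb'.resolve_left (hne hc hb).symm)
  case surj =>
    intro s hs
    obtain ⟨a, haB, b, hbB, hs_eq⟩ :=
      exists_eq_pair_of_card_inter_eq_one (Finset.mem_filter.mp hs).2
    exact ⟨(a, b), Finset.mem_product.mpr ⟨Finset.mem_compl.mpr haB, hbB⟩, Subtype.ext hs_eq.symm⟩

theorem cutWeight_uniform [Nonempty (TwoSubset α)] (B : Finset α) :
    cutWeight (fun s => (PMF.uniformOfFintype (TwoSubset α) s).toReal) B
      = #Bᶜ * #B / (Fintype.card α).choose 2 := by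
  simp only [toReal_uniformOfFintype_twoSubset]
  rw [cutWeight, Finset.sum_const, card_twoSubset_inter_eq_one, nsmul_eq_mul, Nat.cast_mul,
    mul_one_div]

theorem pairMass_uniform [Nonempty (TwoSubset α)] :
    pairMass (fun s => (PMF.uniformOfFintype (TwoSubset α) s).toReal)
      = fun z => if z.2 ∈ z.1.val then 1 / ((Fintype.card α).choose 2 * 2 : ℝ) else 0 := by
  simp only [toReal_uniformOfFintype_twoSubset, ← div_div]
  rfl

theorem corollary2_achievability_general (q : PMF (TwoSubset α)) (B : Finset α) :
    let w : TwoSubset α → ℝ := fun s => (q s).toReal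
    let U : TwoSubset α × α → Bool := fun z => decide (z.2 ∈ B)
    condEnt (pairMass w) U Prod.snd = 0 ∧
    condEnt (pairMass w) U Prod.fst = cutWeight w B ∧
    mi (pairMass w) U Prod.snd - mi (pairMass w) U Prod.fst = cutWeight w B ∧
    cmi (pairMass w) U Prod.snd Prod.fst = cutWeight w B := by
  intro w U
  have hS : condEnt (pairMass w) U Prod.fst = cutWeight w B := condEnt_pairMass w B
  refine ⟨condEnt_comp_self (pairMass w) Prod.snd fun x => decide (x ∈ B), hS, ?_, ?_⟩
  · exact (mi_comp_self_sub_mi (pairMass w) Prod.snd (fun x => decide (x ∈ B)) Prod.fst).trans hS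
  · exact (cmi_comp_self (pairMass w) Prod.snd (fun x => decide (x ∈ B)) Prod.fst).trans hS

end PairModel

theorem half_mul_sub_half (n : ℕ) : n / 2 * (n - n / 2) = n ^ 2 / 4 := by
  rcases Nat.even_or_odd' n with ⟨k, rfl | rfl⟩
  · rw [show 2 * k / 2 = k by omega, show 2 * k - k = k by omega,
      show (2 * k) ^ 2 = 4 * (k * k) by ring]
    omega
  · rw [show (2 * k + 1) / 2 = k by omega, show 2 * k + 1 - k = k + 1 by omega,
      show (2 * k + 1) ^ 2 = 4 * (k * (k + 1)) + 1 by ring]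
    omega

/-- **Achievability computation in Corollary 2** (binary-support pair model).
In the pair model on `{1,…,V}` (state `S` uniform on 2-element subsets, token `X`
uniform on the pair given `S`), for any partition `(A, B)` of the vocabulary into two
nonempty sets and the deterministic binary auxiliary `U = 1{X ∈ B}`:
`H(U|X) = 0`, `H(U|S) = |A||B|/C(V,2)`, `I(U;X) − I(U;S) = |A||B|/C(V,2)` and
`I(U;X|S) = |A||B|/C(V,2)`.  In particular, for `|A| = ⌊V/2⌋` (hence `|B| = ⌈V/2⌉`)
these quantities equal `⌊V²/4⌋ / C(V,2)`. -/
theorem corollary2_achievability (V : ℕ) (hV : 2 ≤ V)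
    (A B : Finset (Fin V)) (hdisj : Disjoint A B) (hcover : A ∪ B = Finset.univ)
    (hA : A.Nonempty) (hB : B.Nonempty) :
    -- joint pmf of (S, X) in the pair model
    let p : {s : Finset (Fin V) // s.card = 2} × Fin V → ℝ :=
      fun z => if z.2 ∈ z.1.val then 1 / ((V.choose 2 : ℝ) * 2) else 0
    let Urv : {s : Finset (Fin V) // s.card = 2} × Fin V → Bool :=
      fun z => decide (z.2 ∈ B)
    let Xrv : {s : Finset (Fin V) // s.card = 2} × Fin V → Fin V := fun z => z.2
    let Srv : {s : Finset (Fin V) // s.card = 2} × Fin V → {s : Finset (Fin V) // s.card = 2} :=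
      fun z => z.1
    condEnt p Urv Xrv = 0 ∧
    condEnt p Urv Srv = (A.card * B.card : ℝ) / (V.choose 2 : ℝ) ∧
    mi p Urv Xrv - mi p Urv Srv = (A.card * B.card : ℝ) / (V.choose 2 : ℝ) ∧
    cmi p Urv Xrv Srv = (A.card * B.card : ℝ) / (V.choose 2 : ℝ) ∧
    (A.card = V / 2 →
      mi p Urv Xrv - mi p Urv Srv = ((V ^ 2 / 4 : ℕ) : ℝ) / (V.choose 2 : ℝ) ∧
      cmi p Urv Xrv Srv = ((V ^ 2 / 4 : ℕ) : ℝ) / (V.choose 2 : ℝ)) := by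
  intro p Urv Xrv Srv
  have : Nonempty (TwoSubset (Fin V)) := nonempty_twoSubset (by rwa [Fintype.card_fin])
  let q := PMF.uniformOfFintype (TwoSubset (Fin V))
  have hp : pairMass (fun s => (q s).toReal) = p := by
    rw [pairMass_uniform, Fintype.card_fin]
  have hA_compl : Bᶜ = A := (IsCompl.of_eq hdisj.eq_bot hcover).eq_compl.symm
  have hcut : cutWeight (fun s => (q s).toReal) B = (A.card * B.card : ℝ) / V.choose 2 := by
    rw [cutWeight_uniform, hA_compl, Fintype.card_fin]
  have hbalanced (h : A.card = V / 2) : (A.card * B.card : ℝ) = (V ^ 2 / 4 : ℕ) := by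
    have hB_card : B.card = V - V / 2 := by
      rw [← h, ← hA_compl, Finset.card_compl, Fintype.card_fin,
        Nat.sub_sub_self (card_finset_fin_le B)]
    rw [h, hB_card, ← half_mul_sub_half, Nat.cast_mul]
  obtain ⟨hX, hS, hmi, hcmi⟩ := corollary2_achievability_general q B
  rw [hp] at hX hS hmi hcmi
  rw [hcut] at hS hmi hcmi
  exact ⟨hX, hS, hmi, hcmi, fun h => hbalanced h ▸ ⟨hmi, hcmi⟩⟩
end
end

section
/- Converse identity in the proof of Corollary 2. Fix an integer V ≥ 2 and work in the pair model. Let U be a {0,1}-valued random variable generated from X by an arbitrary stochastic map, i.e., U is conditionally independent of S given X, with q_i = P(U = 1 | X = i) for i = 1,…,V. Then H(U|S) − H(U|X) = (1 / C(V,2)) · Σ_{1 ≤ i < j ≤ V} [ h₂((q_i + q_j)/2) − (h₂(q_i) + h₂(q_j))/2 ]. -/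
open Finset Filter Real

noncomputable section

open scoped Classical

/-!
If `S → X → U` is a Markov chain with transition kernels `κ` and `Q`, then `U` has law
`∑ x, κ s x * Q x` given `S = s` and law `Q x` given `X = x`. Averaging the entropies of these laws
shows that `H(U|S) − H(U|X)` is the expected Jensen gap of the entropy at the mixture of the `Q x`
with weights `κ s`. In the pair model that mixture is the midpoint of the two output laws of a pair.
-/

lemma sum_pushf_prodMk {α β γ : Type*} [Fintype α] [Fintype β]
    (p : α → ℝ) (f : α → β) (g : α → γ) (c : γ) :
    ∑ b, pushf p (fun a => (f a, g a)) (b, c) = pushf p g c := by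
  simp only [pushf, Prod.mk.injEq, ite_and]
  rw [sum_comm]
  simp

section Entropy

variable {α β γ : Type*} [Fintype α] [Fintype β] [Fintype γ]

lemma ent_const_mul (c : ℝ) (μ : β → ℝ) :
    ent (fun b => c * μ b) = c * ent μ - (∑ b, μ b) * (c * logb 2 c) := by
  have logb_term (b : β) : c * μ b * logb 2 (c * μ b) =
      c * (μ b * logb 2 (μ b)) + μ b * (c * logb 2 c) := by
    rcases eq_or_ne c 0 with rfl | hc
    · simp
    rcases eq_or_ne (μ b) 0 with hμ | hμ
    · simp [hμ]
    rw [logb_mul hc hμ]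
    ring
  simp only [ent, logb_term, sum_add_distrib, ← mul_sum, ← sum_mul]
  ring

lemma ent_prod (μ : β × γ → ℝ) : ent μ = ∑ c, ent fun b => μ (b, c) := by
  simp only [ent, Fintype.sum_prod_type_right, sum_neg_distrib]

lemma condEnt_eq_sum_mul_ent {p : α → ℝ} {f : α → β} {g : α → γ} {w : γ → ℝ} {κ : γ → β → ℝ}
    (hκ : ∀ c, ∑ b, κ c b = 1)
    (hfg : ∀ b c, pushf p (fun a => (f a, g a)) (b, c) = w c * κ c b) :
    condEnt p f g = ∑ c, w c * ent (κ c) := by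
  have hg (c : γ) : pushf p g c = w c := by
    simp only [← sum_pushf_prodMk p f g c, hfg, ← mul_sum, hκ, mul_one]
  simp only [condEnt, entRV, ent_prod, hfg, ent_const_mul, hκ, one_mul, sum_sub_distrib]
  simp only [ent, hg]
  ring

end Entropy

/-- The joint mass function of a Markov chain `S → X → U` with law `P` of the state `S` and
transition kernels `κ` from `S` to the token `X` and `Q` from `X` to the output `U`. -/
def markovJoint {σ ι β : Type*} (P : σ → ℝ) (κ : σ → ι → ℝ) (Q : ι → β → ℝ) : σ × ι × β → ℝ :=
  fun z => P z.1 * κ z.1 z.2.1 * Q z.2.1 z.2.2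

section MarkovChain

variable {σ ι β : Type*} [Fintype σ] [Fintype ι] [Fintype β]

lemma pushf_markovJoint_output_state (P : σ → ℝ) (κ : σ → ι → ℝ) (Q : ι → β → ℝ) (b : β) (s : σ) :
    pushf (markovJoint P κ Q) (fun z => (z.2.2, z.1)) (b, s) = P s * ∑ x, κ s x * Q x b := by
  simp [pushf, markovJoint, Fintype.sum_prod_type_right, ite_and, mul_sum, mul_assoc]

lemma pushf_markovJoint_output_token (P : σ → ℝ) (κ : σ → ι → ℝ) (Q : ι → β → ℝ) (b : β) (x : ι) :
    pushf (markovJoint P κ Q) (fun z => (z.2.2, z.2.1)) (b, x) = (∑ s, P s * κ s x) * Q x b := by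
  simp [pushf, markovJoint, Fintype.sum_prod_type_right, ite_and, sum_mul]

lemma condEnt_markovJoint_output_state (P : σ → ℝ) {κ : σ → ι → ℝ} {Q : ι → β → ℝ}
    (hκ : ∀ s, ∑ x, κ s x = 1) (hQ : ∀ x, ∑ b, Q x b = 1) :
    condEnt (markovJoint P κ Q) (fun z => z.2.2) (fun z => z.1) =
      ∑ s, P s * ent fun b => ∑ x, κ s x * Q x b := by
  refine condEnt_eq_sum_mul_ent (fun s => ?_) (pushf_markovJoint_output_state P κ Q)
  rw [sum_comm]
  simp only [← mul_sum, hQ, mul_one, hκ]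

lemma condEnt_markovJoint_output_token (P : σ → ℝ) (κ : σ → ι → ℝ) {Q : ι → β → ℝ}
    (hQ : ∀ x, ∑ b, Q x b = 1) :
    condEnt (markovJoint P κ Q) (fun z => z.2.2) (fun z => z.2.1) =
      ∑ s, P s * ∑ x, κ s x * ent (Q x) := by
  rw [condEnt_eq_sum_mul_ent hQ (pushf_markovJoint_output_token P κ Q)]
  simp only [sum_mul, mul_sum, mul_assoc]
  exact sum_comm

lemma condEnt_sub_condEnt_markovJoint (P : σ → ℝ) {κ : σ → ι → ℝ} {Q : ι → β → ℝ}
    (hκ : ∀ s, ∑ x, κ s x = 1) (hQ : ∀ x, ∑ b, Q x b = 1) :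
    condEnt (markovJoint P κ Q) (fun z => z.2.2) (fun z => z.1) -
        condEnt (markovJoint P κ Q) (fun z => z.2.2) (fun z => z.2.1) =
      ∑ s, P s * ((ent fun b => ∑ x, κ s x * Q x b) - ∑ x, κ s x * ent (Q x)) := by
  rw [condEnt_markovJoint_output_state P hκ hQ, condEnt_markovJoint_output_token P κ hQ,
    ← sum_sub_distrib]
  simp only [mul_sub]

end MarkovChain

section Pairs

variable {ι : Type*} [Fintype ι]

lemma sum_ite_mem_pair_half_mul [DecidableEq ι] {i j : ι} (hij : i ≠ j) (f : ι → ℝ) :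
    ∑ x, (if x ∈ ({i, j} : Finset ι) then 1 / 2 else 0) * f x = (f i + f j) / 2 := by
  simp only [ite_mul, zero_mul, sum_ite_mem, univ_inter, sum_pair hij]
  ring

lemma sum_card_eq_two {M : Type*} [AddCommMonoid M] [LinearOrder ι] (F : Finset ι → M) :
    ∑ s : {s : Finset ι // s.card = 2}, F s = ∑ i, ∑ j, if i < j then F {i, j} else 0 := by
  rw [← Fintype.sum_prod_type' fun i j : ι => if i < j then F {i, j} else 0, ← sum_filter]
  symm
  refine sum_bij (fun ij hij => ⟨{ij.1, ij.2}, card_pair (mem_filter.1 hij).2.ne⟩)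
    (fun _ _ => mem_univ _) ?injective ?surjective (fun _ _ => rfl)
  case injective =>
    rintro ⟨i, j⟩ hij ⟨k, l⟩ hkl hpair
    have hset : ({i, j} : Set ι) = {k, l} := by
      simpa using congrArg (fun s => (s.val : Set ι)) hpair
    rcases Set.pair_eq_pair_iff.1 hset with ⟨rfl, rfl⟩ | ⟨rfl, rfl⟩
    · rfl
    · exact absurd (mem_filter.1 hij).2 (mem_filter.1 hkl).2.not_gt
  case surjective =>
    rintro ⟨s, hs⟩ -
    obtain ⟨i, j, hij, rfl⟩ := card_eq_two.1 hs
    rcases hij.lt_or_gt with hlt | hgt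
    · exact ⟨(i, j), by simpa using hlt, rfl⟩
    · exact ⟨(j, i), by simpa using hgt, Subtype.ext (pair_comm j i)⟩

end Pairs

/-- The Bernoulli mass function on `Bool` with success probability `r`. -/
def bernoulliMass (r : ℝ) : Bool → ℝ := fun u => if u then r else 1 - r

lemma bernoulliMass_mem_stdSimplex {r : ℝ} (h0 : 0 ≤ r) (h1 : r ≤ 1) :
    bernoulliMass r ∈ stdSimplex ℝ Bool := by
  refine ⟨fun u => ?_, by simp [bernoulliMass]⟩
  cases u <;> simpa [bernoulliMass]

lemma bernoulliMass_midpoint (r t : ℝ) :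
    (fun u => (bernoulliMass r u + bernoulliMass t u) / 2) = bernoulliMass ((r + t) / 2) := by
  funext u
  cases u <;> simp only [bernoulliMass, if_true, Bool.false_eq_true, if_false]
  ring

lemma ent_bernoulliMass (r : ℝ) : ent (bernoulliMass r) = h2 r := by
  simp only [ent, bernoulliMass, h2, Fintype.sum_bool, if_true, Bool.false_eq_true, if_false]
  ring

theorem corollary2_converse_identity_general (V : ℕ) {β : Type*} [Fintype β]
    (Q : Fin V → β → ℝ) (hQ : ∀ i, Q i ∈ stdSimplex ℝ β) :
    let p : {s : Finset (Fin V) // s.card = 2} × Fin V × β → ℝ :=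
      fun z => (if z.2.1 ∈ z.1.val then 1 / ((V.choose 2 : ℝ) * 2) else 0) * Q z.2.1 z.2.2
    condEnt p (fun z => z.2.2) (fun z => z.1) - condEnt p (fun z => z.2.2) (fun z => z.2.1) =
      (1 / (V.choose 2 : ℝ)) * ∑ i : Fin V, ∑ j : Fin V,
        if i < j then
          (ent fun b => (Q i b + Q j b) / 2) - (ent (Q i) + ent (Q j)) / 2
        else 0 := by
  intro p
  let κ (s : Finset (Fin V)) (x : Fin V) : ℝ := if x ∈ s then 1 / 2 else 0
  let jensenGap (s : Finset (Fin V)) : ℝ :=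
    (ent fun b => ∑ x, κ s x * Q x b) - ∑ x, κ s x * ent (Q x)
  have hp : p = markovJoint (fun _ => 1 / (V.choose 2 : ℝ)) (fun s => κ s.val) Q := by
    funext z
    simp only [p, markovJoint, κ, mul_ite, mul_zero, one_div_mul_one_div]
  have hκ (s : {s : Finset (Fin V) // s.card = 2}) : ∑ x, κ s x = 1 := by
    simp [κ, sum_ite_mem, s.property]
  have gap_pair {i j : Fin V} (hij : i < j) : jensenGap {i, j} =
      (ent fun b => (Q i b + Q j b) / 2) - (ent (Q i) + ent (Q j)) / 2 := by
    simp only [jensenGap, κ, sum_ite_mem_pair_half_mul hij.ne]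
  rw [hp, condEnt_sub_condEnt_markovJoint _ hκ fun x => (hQ x).2, ← mul_sum,
    sum_card_eq_two jensenGap]
  congr! 4 with i _ j _ hij
  exact gap_pair hij

/-- **Converse identity in the proof of Corollary 2.**  In the pair model on `{1,…,V}`,
let `U ∈ {0,1}` be generated from `X` by an arbitrary stochastic map (so `U` is
conditionally independent of `S` given `X`) with `qᵢ = P(U = 1 | X = i)`.  Then
`H(U|S) − H(U|X) = (1/C(V,2)) Σ_{i<j} [h₂((qᵢ+qⱼ)/2) − (h₂(qᵢ)+h₂(qⱼ))/2]`. -/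
theorem corollary2_converse_identity (V : ℕ) (hV : 2 ≤ V)
    (q : Fin V → ℝ) (hq0 : ∀ i, 0 ≤ q i) (hq1 : ∀ i, q i ≤ 1) :
    -- joint pmf of (S, X, U): the pair model for (S, X), and U drawn from X via q
    let p : {s : Finset (Fin V) // s.card = 2} × Fin V × Bool → ℝ :=
      fun z => (if z.2.1 ∈ z.1.val then 1 / ((V.choose 2 : ℝ) * 2) else 0) *
        (if z.2.2 then q z.2.1 else 1 - q z.2.1)
    let Urv : {s : Finset (Fin V) // s.card = 2} × Fin V × Bool → Bool := fun z => z.2.2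
    let Xrv : {s : Finset (Fin V) // s.card = 2} × Fin V × Bool → Fin V := fun z => z.2.1
    let Srv : {s : Finset (Fin V) // s.card = 2} × Fin V × Bool →
        {s : Finset (Fin V) // s.card = 2} := fun z => z.1
    condEnt p Urv Srv - condEnt p Urv Xrv =
      (1 / (V.choose 2 : ℝ)) * ∑ i : Fin V, ∑ j : Fin V,
        if i < j then h2 ((q i + q j) / 2) - (h2 (q i) + h2 (q j)) / 2 else 0 := by
  intro _ _ _ _
  refine (corollary2_converse_identity_general V (fun i => bernoulliMass (q i))
    fun i => bernoulliMass_mem_stdSimplex (hq0 i) (hq1 i)).trans ?_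
  simp only [ent_bernoulliMass, bernoulliMass_midpoint]
end
end
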